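/- Let P ∈ ℤ[x] be a polynomial that is either an irreducible quadratic or a product of at least two pairwise non-proportional linear factors a_i x + b_i over ℤ (i.e. a_i b_j − a_j b_i ≠ 0 for i ≠ j), assume P is admissible, and assume P(n) ≥ 2 for all positive integers n. Then #{(m₁,m₂,n₁,n₂) ∈ [1,N]⁴ : m₁ ≠ m₂, n₁ ≠ n₂, each of P(m₁), P(m₂), P(n₁), P(n₂) is squarefree, the largest prime factor of P(m₁) equals that of P(m₂), the largest prime factor of P(n₁) equals that of P(n₂), and P(m₁)P(m₂)P(n₁)P(n₂) is a perfect square} = o(N²) as N → ∞. -/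

import Mathlib

/-- `p` is the largest prime factor of the integer `m`. -/
def IsMaxPrimeFac (p : ℕ) (m : ℤ) : Prop :=
  p.Prime ∧ (p : ℤ) ∣ m ∧ ∀ q : ℕ, q.Prime → (q : ℤ) ∣ m → q ≤ p

section AuxHelpers
open Finset


lemma aux_sq_dvd {x B : ℕ} (hx : Squarefree x) (h : IsSquare (x * B)) : x ∣ B := by
  obtain ⟨k, hk⟩ := h
  have h0 : x ≠ 0 := hx.ne_zero
  have h1 : x ∣ k := by
    have : x ∣ k ^ 2 := ⟨B, by rw [sq]; exact hk.symm⟩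
    exact (hx.dvd_pow_iff_dvd two_ne_zero).1 this
  obtain ⟨j, rfl⟩ := h1
  refine ⟨j * j, ?_⟩
  apply Nat.eq_of_mul_eq_mul_left (Nat.pos_of_ne_zero h0)
  rw [hk]; ring

lemma aux_sq_det {A u v : ℕ} (hA : 0 < A) (hu : Squarefree u) (hv : Squarefree v)
    (h1 : IsSquare (A * u)) (h2 : IsSquare (A * v)) : u = v := by
  obtain ⟨i, hi⟩ := h1
  obtain ⟨j, hj⟩ := h2
  have h3 : IsSquare (u * v) := by
    have : A ^ 2 ∣ (i * j) ^ 2 := ⟨u * v, by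
      calc (i*j)^2 = (i*i)*(j*j) := by ring
        _ = _ := by rw [← hi, ← hj]; ring⟩
    rw [Nat.pow_dvd_pow_iff two_ne_zero] at this
    obtain ⟨k, hk⟩ := this
    refine ⟨k, ?_⟩
    apply Nat.eq_of_mul_eq_mul_left (pow_pos hA 2)
    calc A^2 * (u*v) = (A*u)*(A*v) := by ring
      _ = (i*j)*(i*j) := by rw [hi, hj]; ring
      _ = _ := by rw [hk]; ring
  have h4 := aux_sq_dvd hu h3
  have h5 := aux_sq_dvd hv (by rwa [mul_comm])
  exact Nat.dvd_antisymm h4 h5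

lemma aux_omega (B : ℕ) (hB : 1 ≤ B) : ∃ C : ℕ, 1 ≤ C ∧ ∀ n : ℕ, Squarefree n →
    B ^ n.primeFactors.card ≤ C * n := by
  refine ⟨B ^ B, Nat.one_le_pow _ _ hB, fun n hn => ?_⟩
  have h1 : n.primeFactors.card =
      (n.primeFactors.filter (· < B)).card + (n.primeFactors.filter (¬ · < B)).card :=
    (card_filter_add_card_filter_not _).symm
  rw [h1, pow_add]
  apply Nat.mul_le_mul
  · apply Nat.pow_le_pow_right hB
    calc _ ≤ (range B).card := card_le_card (by intro p; simp)
      _ = B := card_range _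
  · calc B ^ (n.primeFactors.filter (¬ · < B)).card
        = ∏ p ∈ n.primeFactors.filter (¬ · < B), B := by simp
      _ ≤ ∏ p ∈ n.primeFactors.filter (¬ · < B), p := by
          apply Finset.prod_le_prod' ; intro p hp; simp at hp; omega
      _ ≤ ∏ p ∈ n.primeFactors, p := by
          apply Finset.prod_le_prod_of_subset_of_one_le' (filter_subset _ _)
          intro p hp _; exact (Nat.prime_of_mem_primeFactors hp).one_le
      _ = n := Nat.prod_primeFactors_of_squarefree hn

lemma aux_card_div {n : ℕ} (hn : Squarefree n) : n.divisors.card = 2 ^ n.primeFactors.card := by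
  rw [Nat.card_divisors hn.ne_zero]
  calc _ = ∏ p ∈ n.primeFactors, 2 := by
        apply prod_congr rfl; intro p hp
        rw [Nat.factorization_eq_one_of_squarefree hn (Nat.prime_of_mem_primeFactors hp) (Nat.dvd_of_mem_primeFactors hp)]
    _ = _ := by simp

/-- roots mod p -/
lemma aux_roots (P : Polynomial ℤ) (hd : P ≠ 0) (p : ℕ) (hp : p.Prime) :
    ((range p).filter (fun r : ℕ => (p : ℤ) ∣ P.eval (r : ℤ))).card ≤ P.natDegree + P.leadingCoeff.natAbs := by
  haveI := Fact.mk hp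
  by_cases h : P.map (Int.castRingHom (ZMod p)) = 0
  · have h2 : (p : ℤ) ∣ P.leadingCoeff := by
      have := congrArg (fun q => Polynomial.coeff q P.natDegree) h
      simp at this
      exact (ZMod.intCast_zmod_eq_zero_iff_dvd _ _).1 this
    have h3 : p ≤ P.leadingCoeff.natAbs := by
      apply Nat.le_of_dvd
      · simpa using hd
      · exact Int.natCast_dvd.1 h2
    calc _ ≤ (range p).card := card_filter_le _ _
      _ ≤ _ := by simp; omega
  · calc _ ≤ (P.map (Int.castRingHom (ZMod p))).roots.toFinset.card := by
          apply card_le_card_of_injOn (fun r : ℕ => (r : ZMod p))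
          · intro r hr
            simp only [coe_filter, mem_range, Set.mem_ofPred_eq] at hr
            simp only [Multiset.mem_coe, Finset.mem_coe, Multiset.mem_toFinset]
            rw [Polynomial.mem_roots h, Polynomial.IsRoot]
            have := (ZMod.intCast_zmod_eq_zero_iff_dvd (P.eval (r:ℤ)) p).2 hr.2
            rw [← this]
            have h5 := Polynomial.eval_map_apply (f := Int.castRingHom (ZMod p)) (p := P) (r : ℤ)
            simpa using h5
          · intro r hr s hs hrs
            simp only [coe_filter, mem_range, Set.mem_ofPred_eq] at hr hs
            have := (ZMod.natCast_eq_natCast_iff' _ _ _).1 hrs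
            rwa [Nat.mod_eq_of_lt hr.1, Nat.mod_eq_of_lt hs.1] at this
      _ ≤ _ := (Multiset.toFinset_card_le _)
      _ ≤ _ := Polynomial.card_roots' _
      _ ≤ P.natDegree := Polynomial.natDegree_map_le
      _ ≤ _ := by omega

lemma aux_congr_dvd (P : Polynomial ℤ) (p r s : ℕ) (h : r % p = s) :
    (p : ℤ) ∣ P.eval (r : ℤ) ↔ (p : ℤ) ∣ P.eval (s : ℤ) := by
  have h1 : (p : ℤ) ∣ (r : ℤ) - s := by
    rw [← h]; push_cast; exact Int.dvd_self_sub_emod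
  have h2 := h1.trans (Polynomial.sub_dvd_eval_sub (r:ℤ) (s:ℤ) P)
  exact (dvd_iff_dvd_of_dvd_sub h2)

lemma aux_count (P : Polynomial ℤ) (hd : P ≠ 0) (g M : ℕ) (hg : Squarefree g) :
    ((Icc 1 M).filter (fun n : ℕ => g ∣ (P.eval (n : ℤ)).natAbs)).card ≤
      (P.natDegree + P.leadingCoeff.natAbs) ^ g.primeFactors.card * (M / g + 1) := by
  classical
  have hg0 : 0 < g := Nat.pos_of_ne_zero hg.ne_zero
  set S := (Icc 1 M).filter (fun n : ℕ => g ∣ (P.eval (n : ℤ)).natAbs) with hS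
  let F : ℕ → (∀ p ∈ g.primeFactors, ℕ) := fun n p _ => n % p
  have hmaps : ∀ n ∈ S, F n ∈ g.primeFactors.pi
      (fun p => (range p).filter (fun r : ℕ => (p : ℤ) ∣ P.eval (r : ℤ))) := by
    intro n hn
    simp only [hS, mem_filter] at hn
    rw [mem_pi]
    intro p hp
    have hpp := Nat.prime_of_mem_primeFactors hp
    simp only [mem_filter, mem_range]
    refine ⟨Nat.mod_lt _ hpp.pos, ?_⟩
    rw [← aux_congr_dvd P p n _ rfl]
    exact Int.natCast_dvd.2 ((Nat.dvd_of_mem_primeFactors hp).trans hn.2)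
  have hfib : ∀ b ∈ g.primeFactors.pi
      (fun p => (range p).filter (fun r : ℕ => (p : ℤ) ∣ P.eval (r : ℤ))),
      (S.filter (fun n => F n = b)).card ≤ M / g + 1 := by
    intro b _
    calc _ ≤ (range (M / g + 1)).card := by
          apply card_le_card_of_injOn (fun n => n / g)
          · intro n hn
            simp only [hS, coe_filter, mem_filter, mem_Icc, Set.mem_ofPred_eq] at hn
            simp only [coe_range, Set.mem_Iio]
            exact Nat.lt_succ_of_le (Nat.div_le_div_right hn.1.1.2)
          · intro n hn m hm hnm
            simp only [coe_filter, Set.mem_ofPred_eq] at hn hm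
            have hF : F n = F m := hn.2.trans hm.2.symm
            have hmod : n ≡ m [MOD g] := by
              have : ∀ p ∈ g.primeFactors, (p : ℤ) ∣ (m : ℤ) - n := by
                intro p hp
                have := congrFun (congrFun hF p) hp
                exact (Nat.modEq_iff_dvd).1 this
              rw [Nat.modEq_iff_dvd, ← Nat.prod_primeFactors_of_squarefree hg]
              push_cast
              apply Finset.prod_dvd_of_coprime
              · intro p hp q hq hpq
                have := (Nat.coprime_primes (Nat.prime_of_mem_primeFactors hp) (Nat.prime_of_mem_primeFactors hq)).2 hpq
                exact Nat.isCoprime_iff_coprime.2 this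
              · exact this
            have e1 := Nat.div_add_mod n g
            have e2 := Nat.div_add_mod m g
            have : n % g = m % g := hmod
            simp only at hnm
            rw [← e1, ← e2, hnm, this]
      _ = _ := card_range _
  calc S.card ≤ (M / g + 1) * (g.primeFactors.pi
      (fun p => (range p).filter (fun r : ℕ => (p : ℤ) ∣ P.eval (r : ℤ)))).card :=
        card_le_mul_card_image_of_maps_to hmaps _ hfib
    _ ≤ (M / g + 1) * (P.natDegree + P.leadingCoeff.natAbs) ^ g.primeFactors.card := by
        apply Nat.mul_le_mul_left
        rw [card_pi]
        apply Finset.prod_le_pow_card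
        intro p hp
        exact aux_roots P hd p (Nat.prime_of_mem_primeFactors hp)
    _ = _ := mul_comm _ _

lemma aux_fiber (P : Polynomial ℤ) (hd : 0 < P.natDegree) (hpos : ∀ n : ℕ, 0 < n → 2 ≤ P.eval (n : ℤ)) (v M : ℕ) :
    ((Icc 1 M).filter (fun n : ℕ => (P.eval (n : ℤ)).natAbs = v)).card ≤ P.natDegree := by
  have hne : P - Polynomial.C (v:ℤ) ≠ 0 := by
    intro h
    have := congrArg Polynomial.natDegree (sub_eq_zero.1 h)
    simp at this; omega
  calc _ ≤ (P - Polynomial.C (v:ℤ)).roots.toFinset.card := by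
        apply card_le_card_of_injOn (fun n : ℕ => (n : ℤ))
        · intro n hn
          simp only [coe_filter, mem_Icc, Set.mem_ofPred_eq] at hn
          simp only [Finset.mem_coe, Multiset.mem_toFinset]
          rw [Polynomial.mem_roots hne, Polynomial.IsRoot]
          have := hpos n (by omega)
          simp; omega
        · intro a _ b _ h; simpa using h
    _ ≤ _ := (Multiset.toFinset_card_le _)
    _ ≤ _ := Polynomial.card_roots' _
    _ = P.natDegree := Polynomial.natDegree_sub_C



lemma aux_poly_bound (R : Polynomial ℝ) (n : ℕ) (h : R.natDegree ≤ n) :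
    ∃ C : ℝ, 1 ≤ C ∧ ∀ x : ℝ, 1 ≤ x → |R.eval x| ≤ C * x ^ n := by
  refine ⟨1 + ∑ i ∈ range (n+1), |R.coeff i|, ?_, fun x hx => ?_⟩
  · have : 0 ≤ ∑ i ∈ range (n+1), |R.coeff i| := sum_nonneg (fun _ _ => abs_nonneg _)
    linarith
  · rw [Polynomial.eval_eq_sum_range' (Nat.lt_succ_of_le h)]
    have h1 : |∑ i ∈ range (n+1), R.coeff i * x ^ i| ≤ (∑ i ∈ range (n+1), |R.coeff i|) * x ^ n := by
      rw [sum_mul]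
      refine (abs_sum_le_sum_abs _ _).trans (sum_le_sum fun i hi => ?_)
      rw [abs_mul, abs_of_nonneg (by positivity : (0:ℝ) ≤ x ^ i)]
      have : i ≤ n := by simpa [Nat.lt_succ_iff] using hi
      gcongr
    have : 0 ≤ x ^ n := by positivity
    linarith

lemma aux_expand (P : Polynomial ℤ) (hd : 2 ≤ P.natDegree) :
    ∃ h C : ℝ, 1 ≤ C ∧ ∀ n : ℕ, 1 ≤ n →
      |((P.eval (n:ℤ) : ℤ) : ℝ) - P.leadingCoeff * ((n:ℝ) + h) ^ P.natDegree| ≤ C * (n:ℝ) ^ (P.natDegree - 2) := by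
  set d := P.natDegree with hdd
  have ha : (P.leadingCoeff : ℝ) ≠ 0 := by
    have : P ≠ 0 := Polynomial.ne_zero_of_natDegree_gt (n := 1) (by omega)
    simpa using this
  set h : ℝ := (P.coeff (d-1) : ℝ) / (d * P.leadingCoeff) with hh
  set R : Polynomial ℝ := P.map (Int.castRingHom ℝ) - Polynomial.C (P.leadingCoeff : ℝ) * (Polynomial.X + Polynomial.C h) ^ d with hR
  have hRd : R.natDegree ≤ d - 2 := by
    rw [Polynomial.natDegree_le_iff_coeff_eq_zero]
    intro k hk
    rw [hR, Polynomial.coeff_sub, Polynomial.coeff_C_mul, Polynomial.coeff_X_add_C_pow, Polynomial.coeff_map]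
    rcases (by omega : k = d - 1 ∨ k = d ∨ d < k) with rfl | rfl | hk2
    · have e : d - (d - 1) = 1 := by omega
      have e2 : d.choose (d-1) = d := by
        rw [← Nat.choose_symm_of_eq_add (by omega : d = 1 + (d-1))]; simp
      have hd0 : (d:ℝ) ≠ 0 := by positivity
      rw [e, e2, hh]
      simp
      field_simp
      ring
    · simp [hdd]
    · rw [Polynomial.coeff_eq_zero_of_natDegree_lt (by omega), Nat.choose_eq_zero_of_lt hk2]
      simp
  obtain ⟨C, hC, hb⟩ := aux_poly_bound R _ hRd
  refine ⟨h, C, hC, fun n hn => ?_⟩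
  have := hb n (by exact_mod_cast hn)
  have e : R.eval (n:ℝ) = ((P.eval (n:ℤ) : ℤ) : ℝ) - P.leadingCoeff * ((n:ℝ) + h) ^ d := by
    rw [hR]
    have h5 := Polynomial.eval_map_apply (f := Int.castRingHom ℝ) (p := P) (n : ℤ)
    simp at h5
    simp [h5]
  rwa [e] at this

lemma aux_lower (P : Polynomial ℤ) (hd : 2 ≤ P.natDegree) (hpos : ∀ n : ℕ, 0 < n → 2 ≤ P.eval (n : ℤ)) :
    0 < P.leadingCoeff ∧ ∃ c C : ℝ, 1 ≤ c ∧ 1 ≤ C ∧ ∀ n : ℕ, 1 ≤ n →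
      (n:ℝ) ^ P.natDegree ≤ c * ((P.eval (n:ℤ) : ℤ) : ℝ) ∧ ((P.eval (n:ℤ) : ℤ) : ℝ) ≤ C * (n:ℝ) ^ P.natDegree := by
  set d := P.natDegree with hdd
  have hP0 : P ≠ 0 := Polynomial.ne_zero_of_natDegree_gt (n := 1) (by omega)
  set R : Polynomial ℝ := P.map (Int.castRingHom ℝ) - Polynomial.C (P.leadingCoeff : ℝ) * Polynomial.X ^ d with hR
  have hRd : R.natDegree ≤ d - 1 := by
    rw [Polynomial.natDegree_le_iff_coeff_eq_zero]
    intro k hk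
    rw [hR, Polynomial.coeff_sub, Polynomial.coeff_C_mul, Polynomial.coeff_X_pow, Polynomial.coeff_map]
    rcases (by omega : k = d ∨ d < k) with rfl | hk2
    · simp [hdd]
    · rw [Polynomial.coeff_eq_zero_of_natDegree_lt (by omega), if_neg (by omega)]
      simp
  obtain ⟨C, hC, hb⟩ := aux_poly_bound R _ hRd
  have key : ∀ n : ℕ, 1 ≤ n → |((P.eval (n:ℤ) : ℤ) : ℝ) - P.leadingCoeff * (n:ℝ) ^ d| ≤ C * (n:ℝ) ^ (d-1) := by
    intro n hn
    have := hb n (by exact_mod_cast hn)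
    have e : R.eval (n:ℝ) = ((P.eval (n:ℤ) : ℤ) : ℝ) - P.leadingCoeff * (n:ℝ) ^ d := by
      rw [hR]
      have h5 := Polynomial.eval_map_apply (f := Int.castRingHom ℝ) (p := P) (n : ℤ)
      simp at h5
      simp [h5]
    rwa [e] at this
  have hpow : ∀ n : ℕ, (n:ℝ)^d = n * (n:ℝ)^(d-1) := by
    intro n
    rw [← pow_succ']; congr 1; omega
  have hlc : 0 < P.leadingCoeff := by
    by_contra hneg
    have h1 : P.leadingCoeff ≤ -1 := by
      have : P.leadingCoeff ≠ 0 := by simpa using hP0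
      omega
    have h1' : (P.leadingCoeff : ℝ) ≤ -1 := by exact_mod_cast h1
    obtain ⟨n, hn⟩ := exists_nat_gt C
    have hn1 : 1 ≤ n := by
      have : (1:ℝ) < n := by linarith
      exact_mod_cast this.le
    have k := (abs_le.1 (key n hn1)).2
    have k2 : (2:ℝ) ≤ ((P.eval (n:ℤ) : ℤ) : ℝ) := by exact_mod_cast hpos n hn1
    have k3 : (0:ℝ) ≤ (n:ℝ)^(d-1) := by positivity
    rw [hpow] at k
    have : (P.leadingCoeff : ℝ) * (n * (n:ℝ)^(d-1)) ≤ (-1) * (n * (n:ℝ)^(d-1)) := by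
      apply mul_le_mul_of_nonneg_right h1' (by positivity)
    nlinarith
  refine ⟨hlc, 2 + (2 * C) ^ d, P.leadingCoeff + C, ?_, ?_, fun n hn => ⟨?_, ?_⟩⟩
  · have : 0 ≤ (2 * C) ^ d := by positivity
    linarith
  · have : (0:ℝ) < P.leadingCoeff := by exact_mod_cast hlc
    linarith
  · have h1 : (1:ℝ) ≤ P.leadingCoeff := by exact_mod_cast hlc
    have k := (abs_le.1 (key n hn)).1
    have k2 : (2:ℝ) ≤ ((P.eval (n:ℤ) : ℤ) : ℝ) := by exact_mod_cast hpos n hn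
    have hC2 : 0 ≤ (2 * C) ^ d := by positivity
    rcases le_total (n:ℝ) (2 * C) with h2 | h2
    · have : (n:ℝ)^d ≤ (2*C)^d := by gcongr
      nlinarith
    · have k3 : (0:ℝ) ≤ (n:ℝ)^(d-1) := by positivity
      have k4 : (n:ℝ)^d ≤ P.leadingCoeff * (n:ℝ)^d := le_mul_of_one_le_left (by positivity) h1
      have k5 : 2 * C * (n:ℝ)^(d-1) ≤ (n:ℝ)^d := by rw [hpow]; gcongr
      nlinarith
  · have k := (abs_le.1 (key n hn)).2
    have : (n:ℝ)^(d-1) ≤ (n:ℝ)^d := pow_le_pow_right₀ (by exact_mod_cast hn) (by omega)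
    nlinarith



lemma aux_sf_pow {s t k l e : ℕ} (hs : Squarefree s) (ht : Squarefree t) (hk : 0 < k)
    (h : t * k ^ (e+2) = s * l ^ (e+2)) : s = t := by
  obtain ⟨g, k', l', hg, hco, rfl, rfl⟩ := Nat.exists_coprime' (m := k) (n := l) (Nat.gcd_pos_of_pos_left _ hk)
  have hg' : 0 < g ^ (e+2) := by positivity
  have h2 : t * k' ^ (e+2) = s * l' ^ (e+2) := by
    apply Nat.eq_of_mul_eq_mul_right hg'
    rw [mul_pow, mul_pow] at h
    rw [mul_assoc, mul_assoc, h]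
  have hco2 : Nat.Coprime (k' ^ (e+2)) (l' ^ (e+2)) := Nat.Coprime.pow _ _ hco
  have h3 : k' ^ (e+2) ∣ s := hco2.dvd_of_dvd_mul_right ⟨t, by rw [← h2]; ring⟩
  have h4 : l' ^ (e+2) ∣ t := hco2.symm.dvd_of_dvd_mul_right ⟨s, by rw [h2]; ring⟩
  have h5 : k' = 1 := by
    have := hs k' ((show k' * k' ∣ k' ^ (e+2) from ⟨k'^e, by ring⟩).trans h3)
    simpa using this
  have h6 : l' = 1 := by
    have := ht l' ((show l' * l' ∣ l' ^ (e+2) from ⟨l'^e, by ring⟩).trans h4)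
    simpa using this
  subst h5 h6
  simpa using h2.symm

lemma aux_pow_low {X V : ℝ} (hX : 0 ≤ X) (hV : 0 ≤ V) (n : ℕ) :
    X ^ n * |X - V| ≤ |X ^ (n+1) - V ^ (n+1)| := by
  rcases le_total V X with h | h
  · have h1 : V ^ n ≤ X ^ n := by gcongr
    rw [abs_of_nonneg (by linarith)]
    refine le_trans ?_ (le_abs_self _)
    have : V ^ n * V ≤ X ^ n * V := by gcongr
    rw [pow_succ, pow_succ]; linarith
  · have h1 : X ^ n ≤ V ^ n := by gcongr
    rw [abs_of_nonpos (by linarith)]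
    refine le_trans ?_ (neg_le_abs _)
    have : X ^ n * V ≤ V ^ n * V := by gcongr
    rw [pow_succ, pow_succ]; linarith

lemma aux_approx (f : ℕ → ℕ) (e : ℕ) (a h C E Z lam : ℝ) (J : ℕ) (ha : 1 ≤ a) (hC : 1 ≤ C) (hE : 1 ≤ E)
    (hJ : 17 ≤ J)
    (hf : ∀ n : ℕ, 1 ≤ n → |(f n : ℝ) - a * ((n:ℝ) + h) ^ (e+2)| ≤ C * (n:ℝ) ^ e)
    (hZ1 : 1 ≤ Z) (hZE : E ≤ Z) (hZh : 2 * |h| ≤ Z)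
    (x y s t : ℕ) (ht : 0 < t) (hlam : 0 ≤ lam) (hl : lam ^ (e+2) = (s:ℝ) / t)
    (hsE : (s:ℝ) ≤ E * Z ^ 10)
    (hy : y ≤ x) (hx : Z ^ (J-5) ≤ x) (hyx : (x:ℝ) ≤ E * Z ^ 10 * y) (hst : t * f x = s * f y) :
    |((x:ℝ) + h) - lam * ((y:ℝ) + h)| * Z ^ (J - 15) ≤ 2 ^ (e+2) * E * C := by
  have hZ0 : 0 < Z := by linarith
  have hxZ : Z ≤ x := (le_self_pow₀ hZ1 (by omega)).trans hx
  have hx1 : (1:ℝ) ≤ x := hZ1.trans hxZ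
  have hx1' : 1 ≤ x := by exact_mod_cast hx1
  have hyZ : Z ≤ y := by
    have h1 : Z ^ 10 * Z * Z ≤ E * Z ^ 10 * y := by
      refine le_trans ?_ (hx.trans hyx)
      calc Z ^ 10 * Z * Z = Z ^ 12 := by ring
        _ ≤ _ := pow_le_pow_right₀ hZ1 (by omega)
    have h2 : E * Z ^ 10 * y ≤ Z * Z ^ 10 * y := by gcongr
    have h3 : (Z ^ 10 * Z) * Z ≤ (Z ^ 10 * Z) * y := by linarith
    exact le_of_mul_le_mul_left h3 (by positivity)
  have hy1' : 1 ≤ y := by exact_mod_cast (hZ1.trans hyZ)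
  have hh := neg_abs_le h
  have hX : (x:ℝ) / 2 ≤ x + h := by linarith
  have hY : 0 ≤ (y:ℝ) + h := by linarith [abs_nonneg h]
  set X := (x:ℝ) + h
  set Y := (y:ℝ) + h
  have hX0 : 0 ≤ X := by linarith
  have b1 := hf x hx1'
  have b2 := hf y hy1'
  have ht' : (0:ℝ) < t := by exact_mod_cast ht
  have ht1 : (1:ℝ) ≤ t := by exact_mod_cast ht
  have hyx' : (y:ℝ) ≤ x := by exact_mod_cast hy
  have eq1 : (f x : ℝ) = lam ^ (e+2) * f y := by
    rw [hl]; field_simp; exact_mod_cast (by rw [← hst]; ring)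
  have hlE : lam ^ (e+2) ≤ E * Z ^ 10 := by
    rw [hl]; exact (div_le_self (by positivity) ht1).trans hsE
  have hl0 : 0 ≤ lam ^ (e+2) := by positivity
  have key : |X ^ (e+2) - (lam * Y) ^ (e+2)| ≤ 2 * E * C * Z ^ 10 * (x:ℝ) ^ e := by
    have e1 : a * (X ^ (e+2) - (lam * Y) ^ (e+2)) =
        -((f x : ℝ) - a * X ^ (e+2)) + lam ^ (e+2) * ((f y : ℝ) - a * Y ^ (e+2)) := by
      rw [eq1, mul_pow]; ring
    have e2 : |a * (X ^ (e+2) - (lam * Y) ^ (e+2))| ≤ C * (x:ℝ)^e + E * Z ^ 10 * (C * (x:ℝ)^e) := by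
      rw [e1]
      refine (abs_add_le _ _).trans ?_
      rw [abs_neg, abs_mul, abs_of_nonneg hl0]
      have : (y:ℝ)^e ≤ (x:ℝ)^e := by gcongr
      have : |(f y : ℝ) - a * Y ^ (e+2)| ≤ C * (x:ℝ)^e := b2.trans (by gcongr)
      gcongr
    rw [abs_mul, abs_of_nonneg (by linarith)] at e2
    have e3 : |X ^ (e+2) - (lam * Y) ^ (e+2)| ≤ a * |X ^ (e+2) - (lam * Y) ^ (e+2)| :=
      le_mul_of_one_le_left (abs_nonneg _) ha
    have e4 : 1 ≤ E * Z ^ 10 := one_le_mul_of_one_le_of_one_le hE (one_le_pow₀ hZ1)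
    have e5 : C * (x:ℝ)^e ≤ E * Z ^ 10 * (C * (x:ℝ)^e) := le_mul_of_one_le_left (by positivity) e4
    linarith
  have low := aux_pow_low hX0 (mul_nonneg hlam hY) (e+1)
  have hxX : ((x:ℝ)/2)^(e+1) ≤ X^(e+1) := by gcongr
  set q := |X - lam * Y|
  have hq : 0 ≤ q := abs_nonneg _
  have h1 : ((x:ℝ)/2)^(e+1) * q ≤ 2 * E * C * Z ^ 10 * (x:ℝ) ^ e :=
    (mul_le_mul_of_nonneg_right hxX hq).trans (low.trans key)
  have h2 : (x:ℝ)^e * (x * q) ≤ (x:ℝ)^e * (2^(e+2) * E * C * Z^10) := by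
    have : ((x:ℝ)/2)^(e+1) * q * 2^(e+1) ≤ 2 * E * C * Z ^ 10 * (x:ℝ) ^ e * 2^(e+1) := by gcongr
    calc (x:ℝ)^e * (x * q) = ((x:ℝ)/2)^(e+1) * q * 2^(e+1) := by
          rw [div_pow]; field_simp; ring
      _ ≤ _ := this
      _ = _ := by ring
  have h3 : (x:ℝ) * q ≤ 2^(e+2) * E * C * Z^10 := le_of_mul_le_mul_left h2 (by positivity)
  have h4 : (q * Z^(J-15)) * Z^10 ≤ (2^(e+2) * E * C) * Z^10 := by
    calc (q * Z^(J-15)) * Z^10 = Z^(J-5) * q := by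
          rw [mul_assoc, ← pow_add, mul_comm]; congr 2; omega
      _ ≤ x * q := by gcongr
      _ ≤ _ := h3
  exact le_of_mul_le_mul_right h4 (by positivity)

set_option maxHeartbeats 1000000 in
lemma aux_gap (f : ℕ → ℕ) (e : ℕ) (a h C E : ℝ) (J : ℕ) (ha : 1 ≤ a) (hC : 1 ≤ C) (hE : 1 ≤ E)
    (hJ : J = 21 * (e + 2) + 30)
    (hf : ∀ n : ℕ, 1 ≤ n → |(f n : ℝ) - a * ((n:ℝ) + h) ^ (e+2)| ≤ C * (n:ℝ) ^ e) :
    ∃ Z0 : ℝ, 1 ≤ Z0 ∧ ∀ Z : ℝ, Z0 ≤ Z → ∀ x y x' y' s t : ℕ, Squarefree s → Squarefree t →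
      (s:ℝ) ≤ E * Z ^ 10 → (t:ℝ) ≤ E * Z ^ 10 →
      y < x → Z ^ (J-5) ≤ x → (x:ℝ) ≤ E * Z ^ 10 * y → t * f x = s * f y →
      y' < x' → Z ^ (J-5) ≤ x' → (x':ℝ) ≤ E * Z ^ 10 * y' → t * f x' = s * f y' →
      x < x' → Z ^ 21 ≤ (x':ℝ) - x := by
  set M : ℝ := 2 ^ (e+2) * E * C with hM
  have hM1 : 1 ≤ M := by
    rw [hM]
    have : (1:ℝ) ≤ 2^(e+2) := one_le_pow₀ (by norm_num)
    exact one_le_mul_of_one_le_of_one_le (one_le_mul_of_one_le_of_one_le this hE) hC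
  set B : ℝ := 2^(e+2) * M * (e+2) * E with hB
  have hB0 : 0 ≤ B := by positivity
  refine ⟨E + 2 * |h| + 2 * M + B + 1, by linarith [abs_nonneg h], ?_⟩
  intro Z hZ x y x' y' s t hs ht hsE htE hyx hx hxy hst hyx' hx' hxy' hst' hxx
  by_contra hcon
  push Not at hcon
  have habs := abs_nonneg h
  have hZ1 : 1 ≤ Z := by linarith
  have hZ0 : 0 < Z := by linarith
  have ht0 : 0 < t := Nat.pos_of_ne_zero ht.ne_zero
  have ht' : (0:ℝ) < t := by exact_mod_cast ht0
  set lam : ℝ := ((s:ℝ)/t) ^ (1 / ((e+2 : ℕ):ℝ)) with hlamd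
  have hlam : 0 ≤ lam := by positivity
  have hl : lam ^ (e+2) = (s:ℝ) / t := by
    rw [hlamd, one_div]; exact Real.rpow_inv_natCast_pow (by positivity) (by omega)
  have A1 := aux_approx f e a h C E Z lam J ha hC hE (by omega) hf hZ1 (by linarith) (by linarith)
    x y s t ht0 hlam hl hsE hyx.le hx hxy hst
  have A2 := aux_approx f e a h C E Z lam J ha hC hE (by omega) hf hZ1 (by linarith) (by linarith)
    x' y' s t ht0 hlam hl hsE hyx'.le hx' hxy' hst'
  rw [← hM] at A1 A2
  set W := Z ^ (J-15) with hW
  have hWZ : Z ≤ W := le_self_pow₀ hZ1 (by omega)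
  have hW0 : 0 < W := by positivity
  set k : ℤ := (x':ℤ) - x with hk
  set l : ℤ := (y':ℤ) - y with hl'
  have hkR : (k:ℝ) = (x':ℝ) - x := by simp [hk]
  have hlR : (l:ℝ) = (y':ℝ) - y := by simp [hl']
  have hk0 : 0 < k := by omega
  have hkR0 : (0:ℝ) < k := by exact_mod_cast hk0
  have A3 : |(k:ℝ) - lam * l| * W ≤ 2 * M := by
    have : (k:ℝ) - lam * l = ((x':ℝ) + h - lam * (y' + h)) - ((x:ℝ) + h - lam * (y + h)) := by
      rw [hkR, hlR]; ring
    rw [this]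
    have := abs_sub ((x':ℝ) + h - lam * (y' + h)) ((x:ℝ) + h - lam * (y + h))
    have := mul_le_mul_of_nonneg_right this hW0.le
    rw [add_mul] at this
    linarith
  by_cases hz : (t:ℤ) * k ^ (e+2) = s * l ^ (e+2)
  · have hz' : t * k.natAbs ^ (e+2) = s * l.natAbs ^ (e+2) := by
      have := congrArg Int.natAbs hz
      simpa [Int.natAbs_mul, Int.natAbs_pow] using this
    have hst1 : s = t := aux_sf_pow hs ht (by omega) hz'
    have hl1 : lam = 1 := by
      rw [hst1, div_self ht'.ne'] at hl
      exact (pow_eq_one_iff_of_nonneg hlam (by omega)).1 hl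
    rw [hl1] at A1
    have h1 : (1:ℝ) ≤ |(x:ℝ) + h - 1 * (y + h)| := by
      refine le_trans ?_ (le_abs_self _)
      have : (y:ℝ) + 1 ≤ x := by exact_mod_cast hyx
      linarith
    have := mul_le_mul_of_nonneg_right h1 hW0.le
    linarith
  · have h1 : (1:ℝ) ≤ |(t:ℝ) * (k:ℝ) ^ (e+2) - s * (l:ℝ) ^ (e+2)| := by
      have : 1 ≤ |(t:ℤ) * k ^ (e+2) - s * l ^ (e+2)| := Int.one_le_abs (sub_ne_zero.2 hz)
      exact_mod_cast this
    have h2 : (t:ℝ) * (k:ℝ) ^ (e+2) - s * (l:ℝ) ^ (e+2) = t * ((k:ℝ)^(e+2) - (lam * l)^(e+2)) := by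
      rw [mul_pow, hl]; field_simp
    rw [h2, abs_mul, abs_of_pos ht'] at h1
    have h3 := abs_pow_sub_pow_le (k:ℝ) (lam * l) (e+2)
    set q := |(k:ℝ) - lam * l| with hq
    have hq0 : 0 ≤ q := abs_nonneg _
    have hq1 : q ≤ 1 := by
      by_contra hc
      push Not at hc
      have := mul_le_mul_of_nonneg_right hc.le hW0.le
      linarith
    have hZ21 : 1 ≤ Z ^ 21 := one_le_pow₀ hZ1
    have hmax : max |(k:ℝ)| |lam * l| ≤ 2 * Z ^ 21 := by
      have hk21 : |(k:ℝ)| ≤ Z ^ 21 := by rw [abs_of_pos hkR0, hkR]; exact hcon.le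
      apply max_le
      · linarith
      · have : |lam * l| ≤ |(k:ℝ)| + q := by
          have := abs_sub_abs_le_abs_sub (lam * l) (k:ℝ)
          rw [abs_sub_comm] at this
          linarith
        linarith
    have h4 : (1:ℝ) ≤ E * Z^10 * (q * (e+2) * (2 * Z^21)^(e+1)) := by
      refine h1.trans ?_
      refine mul_le_mul htE (h3.trans ?_) (abs_nonneg _) (by positivity)
      push_cast
      gcongr
    have h5 : W ≤ E * Z^10 * (2 * M * (e+2) * (2 * Z^21)^(e+1)) := by
      calc W = 1 * W := by ring
        _ ≤ E * Z^10 * (q * (e+2) * (2 * Z^21)^(e+1)) * W := by gcongr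
        _ = E * Z^10 * ((q * W) * (e+2) * (2 * Z^21)^(e+1)) := by ring
        _ ≤ _ := by gcongr
    have h6 : E * Z^10 * (2 * M * (e+2) * (2 * Z^21)^(e+1)) = B * Z ^ (21 * e + 31) := by
      rw [hB, mul_pow, ← pow_mul, show 21 * (e+1) = 21 * e + 21 by ring, show 21 * e + 31 = 10 + (21*e+21) by ring, pow_add Z 10]
      ring
    have h7 : W = Z ^ 26 * Z ^ (21 * e + 31) := by
      rw [hW, ← pow_add]; congr 1; omega
    rw [h6, h7] at h5
    have h8 : Z ^ 26 ≤ B := le_of_mul_le_mul_right h5 (by positivity)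
    have h9 : Z ≤ Z ^ 26 := le_self_pow₀ hZ1 (by omega)
    linarith



lemma aux_card_sep (A : Finset ℕ) (N : ℕ) (G : ℝ) (hG : 0 < G) (hA : A ⊆ Icc 1 N)
    (hsep : ∀ x ∈ A, ∀ x' ∈ A, x < x' → G ≤ (x':ℝ) - x) : (A.card : ℝ) ≤ N / G + 1 := by
  have hlt : ∀ x ∈ A, ∀ x' ∈ A, x < x' → ⌊(x:ℝ)/G⌋₊ < ⌊(x':ℝ)/G⌋₊ := by
    intro x hx x' hx' h
    have h1 := hsep x hx x' hx' h
    have h2 : (x:ℝ)/G + 1 ≤ (x':ℝ)/G := by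
      rw [div_add_one hG.ne']; gcongr; linarith
    have h3 : ⌊(x:ℝ)/G⌋₊ + 1 = ⌊(x:ℝ)/G + 1⌋₊ := (Nat.floor_add_one (by positivity)).symm
    have h4 := Nat.floor_le_floor h2
    omega
  have h1 : A.card ≤ (range (⌊(N:ℝ)/G⌋₊ + 1)).card := by
    apply card_le_card_of_injOn (fun x : ℕ => ⌊(x:ℝ)/G⌋₊)
    · intro x hx
      have := mem_Icc.1 (hA hx)
      simp only [coe_range, Set.mem_Iio]
      apply Nat.lt_succ_of_le
      apply Nat.floor_le_floor
      have : (x:ℝ) ≤ N := by exact_mod_cast this.2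
      gcongr
    · intro x hx x' hx' h
      simp only at h
      rcases lt_trichotomy x x' with h2 | h2 | h2
      · have := hlt x hx x' hx' h2; omega
      · exact h2
      · have := hlt x' hx' x hx h2; omega
  rw [card_range] at h1
  have h2 : (A.card : ℝ) ≤ (⌊(N:ℝ)/G⌋₊ : ℝ) + 1 := by exact_mod_cast h1
  have h3 := Nat.floor_le (by positivity : 0 ≤ (N:ℝ)/G)
  linarith

open Classical in
lemma aux_bad (f : ℕ → ℕ) (e : ℕ) (a h C C1 E0 : ℝ) (J : ℕ) (ha : 1 ≤ a) (hC : 1 ≤ C) (hC1 : 1 ≤ C1)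
    (hE0 : 1 ≤ E0)
    (hJ : J = 21 * (e + 2) + 30)
    (hf : ∀ n : ℕ, 1 ≤ n → |(f n : ℝ) - a * ((n:ℝ) + h) ^ (e+2)| ≤ C * (n:ℝ) ^ e)
    (hup : ∀ n : ℕ, 1 ≤ n → (f n : ℝ) ≤ C1 * (n:ℝ) ^ (e+2))
    (hfib : ∀ v M : ℕ, ((Icc 1 M).filter (fun n => f n = v)).card ≤ e + 2) :
    ∃ Z0 K : ℝ, 1 ≤ Z0 ∧ 0 ≤ K ∧ ∀ (Z : ℝ) (N : ℕ), Z0 ≤ Z → (N:ℝ) = Z ^ J →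
      (((Icc 1 N ×ˢ Icc 1 N).filter (fun q : ℕ × ℕ => q.2 < q.1 ∧ Squarefree (f q.1) ∧ Squarefree (f q.2) ∧
        Z ^ (J-5) ≤ q.1 ∧ (q.1:ℝ) ^ (e+2) ≤ E0 * Z ^ 10 * (Nat.gcd (f q.1) (f q.2)))).card : ℝ) ≤ K * Z ^ (J-1) := by
  set E := E0 * C1 with hE
  have hE1 : 1 ≤ E := one_le_mul_of_one_le_of_one_le hE0 hC1
  obtain ⟨Z0, hZ0, hgap⟩ := aux_gap f e a h C E J ha hC hE1 hJ hf
  refine ⟨Z0, (e+2) * (E * E * 2), hZ0, by positivity, fun Z N hZ hN => ?_⟩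
  have hZ1 : 1 ≤ Z := hZ0.trans hZ
  have hZp : 0 < Z := by linarith
  set B := (Icc 1 N ×ˢ Icc 1 N).filter (fun q : ℕ × ℕ => q.2 < q.1 ∧ Squarefree (f q.1) ∧ Squarefree (f q.2) ∧
        Z ^ (J-5) ≤ q.1 ∧ (q.1:ℝ) ^ (e+2) ≤ E0 * Z ^ 10 * (Nat.gcd (f q.1) (f q.2))) with hB
  set U := ⌊E * Z ^ 10⌋₊ with hU
  let cond : ℕ → ℕ → ℕ → ℕ → Prop := fun s t x y => Squarefree s ∧ Squarefree t ∧ 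
      (s:ℝ) ≤ E * Z ^ 10 ∧ (t:ℝ) ≤ E * Z ^ 10 ∧
      y < x ∧ Z ^ (J-5) ≤ x ∧ (x:ℝ) ≤ E * Z ^ 10 * y ∧ t * f x = s * f y
  let A : ℕ × ℕ → Finset ℕ := fun st => (Icc 1 N).filter (fun x => ∃ y, cond st.1 st.2 x y)
  have hA : ∀ st, ((A st).card : ℝ) ≤ N / Z ^ 21 + 1 := by
    intro st
    apply aux_card_sep _ _ _ (by positivity) (filter_subset _ _)
    intro x hx x' hx' hlt
    simp only [A, mem_filter] at hx hx'
    obtain ⟨-, y, c1, c2, c3, c4, c5, c6, c7, c8⟩ := hx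
    obtain ⟨-, y', -, -, -, -, d5, d6, d7, d8⟩ := hx'
    exact hgap Z hZ x y x' y' st.1 st.2 c1 c2 c3 c4 c5 c6 c7 c8 d5 d6 d7 d8 hlt
  let F : ℕ × ℕ → (ℕ × ℕ) × ℕ := fun q =>
    ((f q.1 / Nat.gcd (f q.1) (f q.2), f q.2 / Nat.gcd (f q.1) (f q.2)), q.1)
  let T : Finset ((ℕ × ℕ) × ℕ) := (Icc 1 U ×ˢ Icc 1 U).biUnion (fun st => {st} ×ˢ A st)
  have hcond : ∀ q ∈ B, cond (F q).1.1 (F q).1.2 q.1 q.2 ∧ q.1 ∈ Icc 1 N ∧ q.2 ∈ Icc 1 N := by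
    rintro ⟨x, y⟩ hq
    simp only [hB, mem_filter, mem_product] at hq
    obtain ⟨⟨hx, hy⟩, hyx, sx, sy, hxl, hg⟩ := hq
    refine ⟨?_, hx, hy⟩
    rw [mem_Icc] at hx hy
    set g := Nat.gcd (f x) (f y) with hgd
    have hg0 : 0 < g := Nat.gcd_pos_of_pos_left _ (Nat.pos_of_ne_zero sx.ne_zero)
    have hgR : (0:ℝ) < g := by exact_mod_cast hg0
    have gx : g ∣ f x := Nat.gcd_dvd_left _ _
    have gy : g ∣ f y := Nat.gcd_dvd_right _ _
    have hyxR : (y:ℝ) ≤ x := by exact_mod_cast hyx.le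
    have hb : ∀ n, 1 ≤ n → n ≤ x → g ∣ f n → ((f n / g : ℕ) : ℝ) ≤ E * Z ^ 10 := by
      intro n hn hnx hgn
      rw [Nat.cast_div hgn hgR.ne', div_le_iff₀ hgR]
      have h1 := hup n hn
      have hnx' : (n:ℝ) ≤ x := by exact_mod_cast hnx
      have h2 : (n:ℝ)^(e+2) ≤ (x:ℝ)^(e+2) := by gcongr
      calc (f n : ℝ) ≤ C1 * (n:ℝ)^(e+2) := h1
        _ ≤ C1 * (x:ℝ)^(e+2) := by gcongr
        _ ≤ C1 * (E0 * Z ^ 10 * g) := by gcongr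
        _ = _ := by rw [hE]; ring
    refine ⟨?_, ?_, hb x hx.1 le_rfl gx, hb y hy.1 hyx.le gy, hyx, hxl, ?_, ?_⟩
    · exact sx.squarefree_of_dvd (Nat.div_dvd_of_dvd gx)
    · exact sy.squarefree_of_dvd (Nat.div_dvd_of_dvd gy)
    · have h1 : (x:ℝ)^(e+2) ≤ (E * Z ^ 10 * y)^(e+2) := by
        have gle : (g:ℝ) ≤ f y := by exact_mod_cast Nat.le_of_dvd (Nat.pos_of_ne_zero sy.ne_zero) gy
        have hEZ : 1 ≤ E * Z ^ 10 := one_le_mul_of_one_le_of_one_le hE1 (one_le_pow₀ hZ1)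
        calc (x:ℝ)^(e+2) ≤ E0 * Z^10 * g := hg
          _ ≤ E0 * Z^10 * (C1 * (y:ℝ)^(e+2)) := by
              have := gle.trans (hup y hy.1)
              gcongr
          _ = (E * Z^10) * (y:ℝ)^(e+2) := by rw [hE]; ring
          _ ≤ (E * Z^10)^(e+2) * (y:ℝ)^(e+2) := by
              gcongr; exact le_self_pow₀ hEZ (by omega)
          _ = _ := by rw [← mul_pow]
      exact le_of_pow_le_pow_left₀ (by omega) (by positivity) h1
    · show f y / g * f x = f x / g * f y
      apply Nat.eq_of_mul_eq_mul_right hg0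
      calc f y / g * f x * g = (f y / g * g) * f x := by ring
        _ = f y * f x := by rw [Nat.div_mul_cancel gy]
        _ = (f x / g * g) * f y := by rw [Nat.div_mul_cancel gx]; ring
        _ = _ := by ring
  have hmaps : ∀ q ∈ B, F q ∈ T := by
    intro q hq
    obtain ⟨hc, hx, hy⟩ := hcond q hq
    simp only [T, mem_biUnion, mem_product, mem_singleton]
    refine ⟨(F q).1, ⟨?_, ?_⟩, rfl, ?_⟩
    · rw [mem_Icc]; exact ⟨Nat.pos_of_ne_zero hc.1.ne_zero, Nat.le_floor hc.2.2.1⟩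
    · rw [mem_Icc]; exact ⟨Nat.pos_of_ne_zero hc.2.1.ne_zero, Nat.le_floor hc.2.2.2.1⟩
    · simp only [A, mem_filter]
      exact ⟨hx, q.2, hc⟩
  have hfibre : ∀ b ∈ T, (B.filter (fun q => F q = b)).card ≤ e + 2 := by
    intro b _
    rcases (B.filter (fun q => F q = b)).eq_empty_or_nonempty with h0 | ⟨q0, hq0⟩
    · rw [h0]; simp
    · rw [mem_filter] at hq0
      refine le_trans ?_ (hfib (f q0.2) N)
      apply card_le_card_of_injOn (fun q => q.2)
      · intro q hq
        simp only [coe_filter, Set.mem_ofPred_eq] at hq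
        have hc := hcond q hq.1
        have hc0 := hcond q0 hq0.1
        have e1 : F q = F q0 := hq.2.trans hq0.2.symm
        have e2 : q.1 = q0.1 := congrArg (fun z => z.2) e1
        simp only [coe_filter, Set.mem_ofPred_eq]
        refine ⟨hc.2.2, ?_⟩
        have r1 := hc.1.2.2.2.2.2.2.2
        have r2 := hc0.1.2.2.2.2.2.2.2
        rw [e1, e2, r2] at r1
        exact (Nat.eq_of_mul_eq_mul_left (Nat.pos_of_ne_zero hc0.1.1.ne_zero) r1).symm
      · intro q hq q' hq' hqq
        simp only [coe_filter, Set.mem_ofPred_eq] at hq hq'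
        have e1 : F q = F q' := hq.2.trans hq'.2.symm
        have e2 : q.1 = q'.1 := congrArg (fun z => z.2) e1
        exact Prod.ext e2 hqq
  have hcard : B.card ≤ (e+2) * T.card := card_le_mul_card_image_of_maps_to hmaps _ hfibre
  have hT : (T.card : ℝ) ≤ (U:ℝ) * U * (N / Z^21 + 1) := by
    calc (T.card : ℝ) ≤ ((∑ st ∈ Icc 1 U ×ˢ Icc 1 U, ({st} ×ˢ A st).card : ℕ) : ℝ) := by
          exact_mod_cast card_biUnion_le
      _ = ∑ st ∈ Icc 1 U ×ˢ Icc 1 U, ((A st).card : ℝ) := by push_cast; simp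
      _ ≤ ∑ st ∈ Icc 1 U ×ˢ Icc 1 U, ((N:ℝ) / Z^21 + 1) := sum_le_sum (fun st _ => hA st)
      _ = _ := by
          rw [sum_const, card_product, Nat.card_Icc, nsmul_eq_mul, Nat.add_sub_cancel, Nat.cast_mul]
  have hUE : (U:ℝ) ≤ E * Z^10 := Nat.floor_le (by positivity)
  have hNZ : (N:ℝ) / Z^21 + 1 ≤ 2 * Z^(J-21) := by
    have h1 : (N:ℝ) / Z^21 = Z^(J-21) := by
      rw [hN, div_eq_iff (by positivity), ← pow_add]; congr 1; omega
    have : 1 ≤ Z^(J-21) := one_le_pow₀ hZ1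
    linarith
  calc (B.card:ℝ) ≤ (e+2) * T.card := by exact_mod_cast hcard
    _ ≤ (e+2) * ((E * Z^10) * (E * Z^10) * (2 * Z^(J-21))) := by
        refine mul_le_mul_of_nonneg_left (hT.trans ?_) (by positivity)
        gcongr
    _ = (e+2) * (E*E*2) * (Z^20 * Z^(J-21)) := by ring
    _ = _ := by rw [← pow_add]; congr 2; omega

open Classical in
lemma aux_good (f : ℕ → ℕ) (N : ℕ) (tau V : ℝ) (ht : 0 ≤ tau) (hV : 0 ≤ V)
    (hdiv : ∀ x ∈ Icc 1 N, Squarefree (f x) → ((f x).divisors.card : ℝ) ≤ tau)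
    (hcnt : ∀ x ∈ Icc 1 N, Squarefree (f x) → ∀ g, g ∣ f x →
      (((Icc 1 x).filter (fun y => g ∣ f y)).card : ℝ) ≤ tau * ((x:ℝ) / g + 1)) :
    (((Icc 1 N ×ˢ Icc 1 N ×ˢ Icc 1 N).filter (fun q : ℕ × ℕ × ℕ => q.2.1 ≤ q.1 ∧ q.2.2 ≤ q.1 ∧
      Squarefree (f q.1) ∧ ((q.1:ℝ) / (Nat.gcd (f q.1) (f q.2.1)) + 1) *
       ((q.1:ℝ) / (Nat.gcd (f q.1) (f q.2.2)) + 1) ≤ V)).card : ℝ) ≤ N * (tau ^ 4 * V) := by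
  set T := (Icc 1 N ×ˢ Icc 1 N ×ˢ Icc 1 N).filter (fun q : ℕ × ℕ × ℕ => q.2.1 ≤ q.1 ∧ q.2.2 ≤ q.1 ∧
      Squarefree (f q.1) ∧ ((q.1:ℝ) / (Nat.gcd (f q.1) (f q.2.1)) + 1) *
       ((q.1:ℝ) / (Nat.gcd (f q.1) (f q.2.2)) + 1) ≤ V) with hT
  let Y : ℕ → ℕ → Finset ℕ := fun x g => (Icc 1 x).filter (fun y => g ∣ f y)
  let AB : ℕ → Finset (ℕ × ℕ) := fun x => ((f x).divisors ×ˢ (f x).divisors).filter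
    (fun ab => ((x:ℝ) / ab.1 + 1) * ((x:ℝ) / ab.2 + 1) ≤ V)
  let X := (Icc 1 N).filter (fun x => Squarefree (f x))
  let G : ℕ → Finset (ℕ × ℕ × ℕ) := fun x => (AB x).biUnion (fun ab => {x} ×ˢ Y x ab.1 ×ˢ Y x ab.2)
  have hsub : T ⊆ X.biUnion G := by
    rintro ⟨x, y, z⟩ hq
    simp only [hT, mem_filter, mem_product, mem_Icc] at hq
    obtain ⟨⟨hx, hy, hz⟩, hyx, hzx, sx, hv⟩ := hq
    simp only [X, G, AB, Y, mem_biUnion, mem_filter, mem_product, mem_singleton, mem_Icc]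
    exact ⟨x, ⟨hx, sx⟩, (Nat.gcd (f x) (f y), Nat.gcd (f x) (f z)),
      ⟨⟨Nat.mem_divisors.2 ⟨Nat.gcd_dvd_left _ _, sx.ne_zero⟩,
        Nat.mem_divisors.2 ⟨Nat.gcd_dvd_left _ _, sx.ne_zero⟩⟩, hv⟩, rfl,
        ⟨⟨hy.1, hyx⟩, Nat.gcd_dvd_right _ _⟩, ⟨⟨hz.1, hzx⟩, Nat.gcd_dvd_right _ _⟩⟩
  have hG : ∀ x ∈ X, ((G x).card : ℝ) ≤ tau ^ 4 * V := by
    intro x hx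
    simp only [X, mem_filter] at hx
    have hd := hdiv x hx.1 hx.2
    calc ((G x).card : ℝ) ≤ ((∑ ab ∈ AB x, ({x} ×ˢ Y x ab.1 ×ˢ Y x ab.2).card : ℕ) : ℝ) := by
          exact_mod_cast card_biUnion_le
      _ = ∑ ab ∈ AB x, ((Y x ab.1).card : ℝ) * ((Y x ab.2).card : ℝ) := by push_cast; simp
      _ ≤ ∑ ab ∈ AB x, tau ^ 2 * V := by
          apply sum_le_sum
          rintro ⟨a, b⟩ hab
          simp only [AB, mem_filter, mem_product, Nat.mem_divisors] at hab
          calc ((Y x a).card : ℝ) * ((Y x b).card : ℝ)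
              ≤ (tau * ((x:ℝ) / a + 1)) * (tau * ((x:ℝ) / b + 1)) := by
                apply mul_le_mul (hcnt x hx.1 hx.2 a hab.1.1.1) (hcnt x hx.1 hx.2 b hab.1.2.1)
                  (by positivity) (by positivity)
            _ = tau ^ 2 * (((x:ℝ) / a + 1) * ((x:ℝ) / b + 1)) := by ring
            _ ≤ _ := by gcongr; exact hab.2
      _ = (AB x).card * (tau ^ 2 * V) := by simp
      _ ≤ (tau * tau) * (tau ^ 2 * V) := by
          gcongr
          calc ((AB x).card : ℝ) ≤ (((f x).divisors ×ˢ (f x).divisors).card : ℝ) := by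
                exact_mod_cast card_filter_le _ _
            _ = (f x).divisors.card * (f x).divisors.card := by rw [card_product]; push_cast; rfl
            _ ≤ _ := by gcongr
      _ = _ := by ring
  calc (T.card : ℝ) ≤ ((X.biUnion G).card : ℝ) := by exact_mod_cast card_le_card hsub
    _ ≤ ((∑ x ∈ X, (G x).card : ℕ) : ℝ) := by exact_mod_cast card_biUnion_le
    _ = ∑ x ∈ X, ((G x).card : ℝ) := by push_cast; rfl
    _ ≤ ∑ x ∈ X, tau ^ 4 * V := sum_le_sum hG
    _ = X.card * (tau ^ 4 * V) := by simp
    _ ≤ N * (tau ^ 4 * V) := by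
        gcongr
        calc X.card ≤ (Icc 1 N).card := card_filter_le _ _
          _ = N := by simp

lemma aux_dich (e J : ℕ) (x a b c c0 Z : ℝ) (hJ : 15 ≤ J) (hZ : 1 ≤ Z) (hc0 : 1 ≤ c0) (hx : 1 ≤ x) (hxN : x ≤ Z ^ J)
    (hc : 1 ≤ c) (hcb : c ≤ b) (hba : b ≤ a) (h : x ^ (e+2) ≤ c0 * (a * b * c)) :
    (x / a + 1) * (x / b + 1) ≤ 4 * c0 * Z ^ (J-5) ∨ (Z ^ (J-5) ≤ x ∧ x ^ (e+2) ≤ c0 * Z ^ 10 * a) := by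
  have hb0 : 0 < b := by linarith
  have ha0 : 0 < a := by linarith
  have hZ0 : 0 < Z := by linarith
  by_cases hbad : Z ^ (J-5) ≤ x ∧ b ≤ Z ^ 5
  · right
    refine ⟨hbad.1, h.trans ?_⟩
    have h1 : b * c ≤ Z ^ 5 * Z ^ 5 := by
      apply mul_le_mul hbad.2 (hcb.trans hbad.2) (by linarith) (by positivity)
    calc c0 * (a * b * c) = c0 * a * (b * c) := by ring
      _ ≤ c0 * a * (Z^5 * Z^5) := by gcongr
      _ = _ := by ring
  · left
    have hW1 : 1 ≤ Z ^ (J-5) := one_le_pow₀ hZ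
    have hNW : Z ^ J = Z ^ 5 * Z ^ (J-5) := by rw [← pow_add]; congr 1; omega
    set W := Z ^ (J-5) with hW
    have hcW : W ≤ c0 * W := le_mul_of_one_le_left (by linarith) hc0
    have h1 : x / b ≤ W := by
      rw [div_le_iff₀ hb0]
      by_cases h2 : W ≤ x
      · have : Z ^ 5 < b := by
          by_contra hh; exact hbad ⟨h2, not_lt.1 hh⟩
        calc x ≤ Z^5 * W := by rw [← hNW]; exact hxN
          _ ≤ b * W := by gcongr
          _ = _ := mul_comm _ _
      · push Not at h2
        have : W * 1 ≤ W * b := by gcongr; linarith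
        linarith
    have h2 : x / a ≤ x / b := by gcongr
    have h3 : (x / a) * (x / b) ≤ c0 * W := by
      rw [div_mul_div_comm, div_le_iff₀ (by positivity)]
      by_cases h4 : c ≤ W
      · calc x * x = x ^ 2 := by ring
          _ ≤ x ^ (e+2) := pow_le_pow_right₀ hx (by omega)
          _ ≤ c0 * (a * b * c) := h
          _ = c0 * c * (a * b) := by ring
          _ ≤ _ := by gcongr
      · push Not at h4
        have hbW : W ≤ b := by linarith
        have haW : W ≤ a := by linarith
        have hZW : Z ^ 10 ≤ W := pow_le_pow_right₀ hZ (by omega)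
        calc x * x ≤ (Z^5 * W) * (Z^5 * W) := by rw [← hNW]; gcongr
          _ = Z^10 * (W * W) := by ring
          _ ≤ (c0 * W) * (a * b) := by
              apply mul_le_mul (hZW.trans hcW) _ (by positivity) (by positivity)
              gcongr
    nlinarith



def auxMx (p m : ℕ) : Prop := p.Prime ∧ p ∣ m ∧ ∀ q : ℕ, q.Prime → q ∣ m → q ≤ p

open Classical in
lemma aux_T (f : ℕ → ℕ) (D : ℕ) (c : ℝ) (hc : 1 ≤ c) (hlow : ∀ n : ℕ, 1 ≤ n → (n:ℝ) ≤ c * f n)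
    (hcnt : ∀ p M : ℕ, p.Prime → ((Icc 1 M).filter (fun n => p ∣ f n)).card ≤ D * (M / p + 1)) :
    ∀ ε : ℝ, 0 < ε → ∃ N₀ : ℕ, ∀ N : ℕ, N₀ ≤ N →
    (((Icc 1 N ×ˢ Icc 1 N).filter (fun q : ℕ × ℕ => Squarefree (f q.1) ∧ Squarefree (f q.2) ∧
      ∃ p, auxMx p (f q.1) ∧ auxMx p (f q.2))).card : ℝ) ≤ ε * (N:ℝ)^2 := by
  intro ε hε
  obtain ⟨K, hK⟩ := exists_nat_gt (3 * (D:ℝ) / ε)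
  have hK0 : (0:ℝ) < K := lt_of_le_of_lt (by positivity) hK
  have hK1 : 0 < K := by exact_mod_cast hK0
  have hDK : (D:ℝ) / K ≤ ε / 3 := by
    rw [div_lt_iff₀ hε] at hK
    rw [div_le_iff₀ hK0]; linarith
  set U : ℕ := ⌊c * K.factorial⌋₊ with hU
  obtain ⟨N₀, hN₀⟩ := exists_nat_gt (3 * (D + (U:ℝ) * U) / ε + 1)
  refine ⟨N₀, fun N hN => ?_⟩
  set T := (Icc 1 N ×ˢ Icc 1 N).filter (fun q : ℕ × ℕ => Squarefree (f q.1) ∧ Squarefree (f q.2) ∧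
      ∃ p, auxMx p (f q.1) ∧ auxMx p (f q.2)) with hT
  let Y : ℕ → Finset ℕ := fun x => (Icc 1 N).filter (fun y => ∃ p, K < p ∧ auxMx p (f x) ∧ p ∣ f y)
  have hY : ∀ x, (Y x).card ≤ D * (N / K + 1) := by
    intro x
    by_cases h : ∃ p, K < p ∧ auxMx p (f x)
    · obtain ⟨p, hp, hpm⟩ := h
      calc (Y x).card ≤ ((Icc 1 N).filter (fun n => p ∣ f n)).card := by
            apply card_le_card
            intro y hy
            simp only [Y, mem_filter] at hy ⊢
            obtain ⟨h1, q, hq, hqm, hqy⟩ := hy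
            have : p = q := le_antisymm (hqm.2.2 p hpm.1 hpm.2.1) (hpm.2.2 q hqm.1 hqm.2.1)
            exact ⟨h1, this ▸ hqy⟩
        _ ≤ D * (N / p + 1) := hcnt p N hpm.1
        _ ≤ _ := by
          gcongr
    · have : Y x = ∅ := by
        apply filter_eq_empty_iff.2
        rintro y _ ⟨p, h1, h2, -⟩
        exact h ⟨p, h1, h2⟩
      rw [this]; simp
  have hsm : ∀ n p, 1 ≤ n → Squarefree (f n) → auxMx p (f n) → p ≤ K → n ∈ Icc 1 U := by
    intro n p hn hs hm hp
    have h1 : f n ∣ K.factorial := by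
      rw [← Nat.prod_primeFactors_of_squarefree hs, ← Finset.prod_Ico_id_eq_factorial]
      apply prod_dvd_prod_of_subset
      intro q hq
      rw [mem_Ico]
      exact ⟨(Nat.prime_of_mem_primeFactors hq).one_le, Nat.lt_succ_of_le
        ((hm.2.2 q (Nat.prime_of_mem_primeFactors hq) (Nat.dvd_of_mem_primeFactors hq)).trans hp)⟩
    have h2 : (f n : ℝ) ≤ K.factorial := by
      exact_mod_cast Nat.le_of_dvd (Nat.factorial_pos _) h1
    rw [mem_Icc]
    refine ⟨hn, Nat.le_floor ((hlow n hn).trans ?_)⟩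
    gcongr
  have hsub : T ⊆ (Icc 1 U ×ˢ Icc 1 U) ∪ (Icc 1 N).biUnion (fun x => {x} ×ˢ Y x) := by
    rintro ⟨x, y⟩ hq
    simp only [hT, mem_filter, mem_product] at hq
    obtain ⟨⟨hx, hy⟩, sx, sy, p, px, py⟩ := hq
    rw [mem_union]
    rcases le_or_gt p K with h | h
    · left
      rw [mem_product]
      exact ⟨hsm x p (mem_Icc.1 hx).1 sx px h, hsm y p (mem_Icc.1 hy).1 sy py h⟩
    · right
      simp only [mem_biUnion, mem_product, mem_singleton, Y, mem_filter]
      exact ⟨x, hx, rfl, hy, p, h, px, py.2.1⟩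
  have hcard : T.card ≤ U * U + N * (D * (N / K + 1)) := by
    refine (card_le_card hsub).trans ((card_union_le _ _).trans ?_)
    apply Nat.add_le_add
    · simp
    · calc _ ≤ ∑ x ∈ Icc 1 N, ({x} ×ˢ Y x).card := card_biUnion_le
        _ ≤ ∑ x ∈ Icc 1 N, D * (N / K + 1) := by
            apply sum_le_sum; intro x _; simpa using hY x
        _ = _ := by simp
  have hcR : (T.card : ℝ) ≤ U * U + N * (D * ((N:ℝ) / K + 1)) := by
    calc (T.card : ℝ) ≤ ((U * U + N * (D * (N / K + 1)) : ℕ) : ℝ) := by exact_mod_cast hcard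
      _ ≤ _ := by
        push_cast
        gcongr
        exact Nat.cast_div_le
  have hNN : 3 * (D + (U:ℝ) * U) / ε + 1 < N := hN₀.trans_le (by exact_mod_cast hN)
  have h0 : 0 ≤ 3 * (D + (U:ℝ) * U) / ε := by positivity
  have hN1 : (1:ℝ) ≤ N := by linarith
  have h1 : 3 * (D + (U:ℝ) * U) ≤ ε * N := by
    have : 3 * (D + (U:ℝ) * U) / ε ≤ N := by linarith
    rw [div_le_iff₀ hε] at this; linarith
  have h2 : (N:ℝ) * (D * ((N:ℝ) / K + 1)) = (N:ℝ)^2 * (D / K) + N * D := by ring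
  have h3 : (N:ℝ)^2 * (D / K) ≤ (N:ℝ)^2 * (ε / 3) := by gcongr
  have h4 : (U:ℝ) * U ≤ N * ((U:ℝ) * U) := le_mul_of_one_le_left (by positivity) hN1
  have h5 : (N:ℝ) * (3 * (D + (U:ℝ) * U)) ≤ N * (ε * N) := by gcongr
  nlinarith

lemma aux_sort (v : Fin 4 → ℕ) (g : ℕ → ℕ → ℕ) : ∃ σ : Equiv.Perm (Fin 4), (∀ i, v (σ i) ≤ v (σ 0)) ∧
    g (v (σ 0)) (v (σ 2)) ≤ g (v (σ 0)) (v (σ 1)) ∧ g (v (σ 0)) (v (σ 3)) ≤ g (v (σ 0)) (v (σ 2)) := by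
  obtain ⟨i, hi⟩ := Finite.exists_max v
  set s := Equiv.swap 0 i with hs
  have key : ∀ ρ : Equiv.Perm (Fin 4), ρ 0 = 0 →
      g (v (s 0)) (v (s (ρ 2))) ≤ g (v (s 0)) (v (s (ρ 1))) →
      g (v (s 0)) (v (s (ρ 3))) ≤ g (v (s 0)) (v (s (ρ 2))) → 
      ∃ σ : Equiv.Perm (Fin 4), (∀ i, v (σ i) ≤ v (σ 0)) ∧
    g (v (σ 0)) (v (σ 2)) ≤ g (v (σ 0)) (v (σ 1)) ∧ g (v (σ 0)) (v (σ 3)) ≤ g (v (σ 0)) (v (σ 2)) := by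
    intro ρ h0 h1 h2
    refine ⟨ρ.trans s, fun j => ?_, ?_, ?_⟩
    · simp only [Equiv.trans_apply, h0]
      rw [hs, Equiv.swap_apply_left]; exact hi _
    · simpa only [Equiv.trans_apply, h0] using h1
    · simpa only [Equiv.trans_apply, h0] using h2
  have k2 : ∀ ρ : Equiv.Perm (Fin 4), ∀ a b c : Fin 4, ρ 0 = 0 → ρ 1 = a → ρ 2 = b → ρ 3 = c → 
      g (v (s 0)) (v (s b)) ≤ g (v (s 0)) (v (s a)) →
      g (v (s 0)) (v (s c)) ≤ g (v (s 0)) (v (s b)) → 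
      ∃ σ : Equiv.Perm (Fin 4), (∀ i, v (σ i) ≤ v (σ 0)) ∧
    g (v (σ 0)) (v (σ 2)) ≤ g (v (σ 0)) (v (σ 1)) ∧ g (v (σ 0)) (v (σ 3)) ≤ g (v (σ 0)) (v (σ 2)) := by
    rintro ρ a b c h0 rfl rfl rfl h1 h2
    exact key ρ h0 h1 h2
  rcases le_total (g (v (s 0)) (v (s 1))) (g (v (s 0)) (v (s 2))) with h12 | h12 <;>
  rcases le_total (g (v (s 0)) (v (s 1))) (g (v (s 0)) (v (s 3))) with h13 | h13 <;>
  rcases le_total (g (v (s 0)) (v (s 2))) (g (v (s 0)) (v (s 3))) with h23 | h23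
  · exact k2 (Equiv.swap 1 3) 3 2 1 (by decide) (by decide) (by decide) (by decide) h23 h12
  · exact k2 (Equiv.swap 1 2 * Equiv.swap 2 3) 2 3 1 (by decide) (by decide) (by decide) (by decide) h23 h13
  · exact k2 (Equiv.swap 1 2) 2 1 3 (by decide) (by decide) (by decide) (by decide) h12 h13
  · exact k2 (Equiv.swap 1 2) 2 1 3 (by decide) (by decide) (by decide) (by decide) h12 h13
  · exact k2 (Equiv.swap 1 3 * Equiv.swap 2 3) 3 1 2 (by decide) (by decide) (by decide) (by decide) h13 h12
  · exact k2 (Equiv.swap 1 3 * Equiv.swap 2 3) 3 1 2 (by decide) (by decide) (by decide) (by decide) h13 h12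
  · exact k2 (Equiv.swap 2 3) 1 3 2 (by decide) (by decide) (by decide) (by decide) h13 h23
  · exact k2 1 1 2 3 (by decide) (by decide) (by decide) (by decide) h12 h23

lemma aux_perm (S : Finset (Fin 4 → ℕ)) (O : (Fin 4 → ℕ) → Prop) [DecidablePred O]
    (hcl : ∀ v ∈ S, ∀ σ : Equiv.Perm (Fin 4), v ∘ σ ∈ S)
    (hO : ∀ v ∈ S, ∃ σ : Equiv.Perm (Fin 4), O (v ∘ σ)) : S.card ≤ 24 * (S.filter O).card := by
  have hsub : S ⊆ (univ : Finset (Equiv.Perm (Fin 4))).biUnion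
      (fun σ => (S.filter O).image (fun v => v ∘ σ)) := by
    intro v hv
    obtain ⟨σ, hσ⟩ := hO v hv
    simp only [mem_biUnion, mem_image, mem_filter, mem_univ, true_and]
    refine ⟨σ⁻¹, v ∘ σ, ⟨hcl v hv σ, hσ⟩, ?_⟩
    ext i; simp
  calc S.card ≤ _ := card_le_card hsub
    _ ≤ ∑ σ : Equiv.Perm (Fin 4), ((S.filter O).image (fun v => v ∘ σ)).card := card_biUnion_le
    _ ≤ ∑ σ : Equiv.Perm (Fin 4), (S.filter O).card := sum_le_sum (fun _ _ => card_image_le)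
    _ = 24 * (S.filter O).card := by
        rw [sum_const, card_univ, Fintype.card_perm, Fintype.card_fin]; rfl



open Classical in
lemma aux_dist (f : ℕ → ℕ) (e D : ℕ) (a h C C1 c0 : ℝ) (ha : 1 ≤ a) (hC : 1 ≤ C) (hC1 : 1 ≤ C1)
    (hc0 : 1 ≤ c0) (hD : 2 ≤ D)
    (hf : ∀ n : ℕ, 1 ≤ n → |(f n : ℝ) - a * ((n:ℝ) + h) ^ (e+2)| ≤ C * (n:ℝ) ^ e)
    (hup : ∀ n : ℕ, 1 ≤ n → (f n : ℝ) ≤ C1 * (n:ℝ) ^ (e+2))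
    (hlow : ∀ n : ℕ, 1 ≤ n → (n:ℝ) ^ (e+2) ≤ c0 * f n)
    (hfib : ∀ v M : ℕ, ((Icc 1 M).filter (fun n => f n = v)).card ≤ e + 2)
    (hcnt : ∀ g M : ℕ, Squarefree g → ((Icc 1 M).filter (fun n => g ∣ f n)).card ≤
      D ^ g.primeFactors.card * (M / g + 1)) :
    ∀ ε : ℝ, 0 < ε → ∃ N₀ : ℕ, ∀ N : ℕ, N₀ ≤ N →
    (((Fintype.piFinset (fun _ : Fin 4 => Icc 1 N)).filter (fun v => Function.Injective v ∧
      (∀ i, Squarefree (f (v i))) ∧ IsSquare (∏ i, f (v i)))).card : ℝ) ≤ ε * (N:ℝ)^2 := by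
  intro ε hε
  obtain ⟨J, hJ⟩ : ∃ J, J = 21 * (e + 2) + 30 := ⟨_, rfl⟩
  obtain ⟨Z0, K, hZ0, hK, hbad⟩ := aux_bad f e a h C C1 c0 J ha hC hC1 hc0 hJ hf hup hfib
  obtain ⟨Co, hCo, hom⟩ := aux_omega (D ^ (J * (e+2))) (Nat.one_le_pow _ _ (by omega))
  have hCoR : (1:ℝ) ≤ Co := by exact_mod_cast hCo
  set Q : ℝ := Co * C1 with hQ
  have hQ1 : 1 ≤ Q := one_le_mul_of_one_le_of_one_le hCoR hC1
  set L : ℝ := 24 * (e+2) * (Q ^ 4 * (4 * c0) + K) with hL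
  have hL0 : 0 ≤ L := by positivity
  set Zm : ℝ := Z0 + L / ε with hZm
  have hLe : 0 ≤ L / ε := by positivity
  obtain ⟨N₀, hN₀⟩ := exists_nat_gt (Zm ^ J)
  refine ⟨N₀, fun N hN => ?_⟩
  have hNN : Zm ^ J < N := hN₀.trans_le (by exact_mod_cast hN)
  obtain ⟨Z, hZpos, hNZ⟩ : ∃ Z : ℝ, 0 ≤ Z ∧ (N:ℝ) = Z ^ J :=
    ⟨(N:ℝ) ^ (((J:ℕ):ℝ)⁻¹), by positivity, (Real.rpow_inv_natCast_pow (by positivity) (by omega)).symm⟩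
  have hZmZ : Zm ≤ Z := by
    rw [hNZ] at hNN
    exact (lt_of_pow_lt_pow_left₀ _ hZpos hNN).le
  have hZZ0 : Z0 ≤ Z := by linarith
  have hZ1 : 1 ≤ Z := by linarith
  have hZp : 0 < Z := by linarith
  have hLZ : L ≤ ε * Z := by
    have : L / ε ≤ Z := by linarith
    rw [div_le_iff₀ hε] at this; linarith
  have hbadN := hbad Z N hZZ0 hNZ
  set B := (Icc 1 N ×ˢ Icc 1 N).filter (fun q : ℕ × ℕ => q.2 < q.1 ∧ Squarefree (f q.1) ∧ Squarefree (f q.2) ∧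
        Z ^ (J-5) ≤ q.1 ∧ (q.1:ℝ) ^ (e+2) ≤ c0 * Z ^ 10 * (Nat.gcd (f q.1) (f q.2))) with hB
  -- divisor bounds
  have hom2 : ∀ x ∈ Icc 1 N, Squarefree (f x) → ((D ^ (f x).primeFactors.card : ℕ) : ℝ) ≤ Q * Z := by
    intro x hx hs
    rw [mem_Icc] at hx
    have h1 := hom _ hs
    have hxN : (x:ℝ) ≤ Z ^ J := by rw [← hNZ]; exact_mod_cast hx.2
    have h2 : ((D ^ (f x).primeFactors.card : ℕ) : ℝ) ^ (J * (e+2)) ≤ (Q * Z) ^ (J * (e+2)) := by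
      calc ((D ^ (f x).primeFactors.card : ℕ) : ℝ) ^ (J * (e+2))
          = (((D ^ (J * (e+2))) ^ (f x).primeFactors.card : ℕ) : ℝ) := by
            push_cast; rw [← pow_mul, ← pow_mul, mul_comm]
        _ ≤ Co * f x := by exact_mod_cast h1
        _ ≤ Co * (C1 * (x:ℝ)^(e+2)) := by gcongr; exact hup x hx.1
        _ ≤ Co * (C1 * (Z ^ J)^(e+2)) := by gcongr
        _ = Q * Z ^ (J * (e+2)) := by rw [hQ, pow_mul]; ring
        _ ≤ Q ^ (J * (e+2)) * Z ^ (J * (e+2)) := by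
            gcongr; exact le_self_pow₀ hQ1 (by rw [hJ]; positivity)
        _ = _ := (mul_pow Q Z _).symm
    exact le_of_pow_le_pow_left₀ (by rw [hJ]; positivity) (by positivity) h2
  have hgoodN := aux_good f N (Q * Z) (4 * c0 * Z ^ (J-5)) (by positivity) (by positivity)
    (by
      intro x hx hs
      refine le_trans ?_ (hom2 x hx hs)
      rw [aux_card_div hs]
      exact_mod_cast Nat.pow_le_pow_left hD _)
    (by
      intro x hx hs g hg
      have hgs := hs.squarefree_of_dvd hg
      calc (((Icc 1 x).filter (fun y => g ∣ f y)).card : ℝ)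
          ≤ ((D ^ g.primeFactors.card * (x / g + 1) : ℕ) : ℝ) := by exact_mod_cast hcnt g x hgs
        _ ≤ ((D ^ (f x).primeFactors.card * (x / g + 1) : ℕ) : ℝ) := by
            have : g.primeFactors.card ≤ (f x).primeFactors.card :=
              card_le_card (Nat.primeFactors_mono hg hs.ne_zero)
            have := Nat.pow_le_pow_right (by omega : 0 < D) this
            exact_mod_cast Nat.mul_le_mul_right _ this
        _ = ((D ^ (f x).primeFactors.card : ℕ) : ℝ) * (((x / g : ℕ) : ℝ) + 1) := by push_cast; rfl
        _ ≤ _ := by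
            gcongr
            · exact hom2 x hx hs
            · exact Nat.cast_div_le)
  set Tri := (Icc 1 N ×ˢ Icc 1 N ×ˢ Icc 1 N).filter (fun q : ℕ × ℕ × ℕ => q.2.1 ≤ q.1 ∧ q.2.2 ≤ q.1 ∧
      Squarefree (f q.1) ∧ ((q.1:ℝ) / (Nat.gcd (f q.1) (f q.2.1)) + 1) *
       ((q.1:ℝ) / (Nat.gcd (f q.1) (f q.2.2)) + 1) ≤ 4 * c0 * Z ^ (J-5)) with hTri
  set S := (Fintype.piFinset (fun _ : Fin 4 => Icc 1 N)).filter (fun v => Function.Injective v ∧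
      (∀ i, Squarefree (f (v i))) ∧ IsSquare (∏ i, f (v i))) with hS
  let O : (Fin 4 → ℕ) → Prop := fun v => (∀ i, v i ≤ v 0) ∧
    Nat.gcd (f (v 0)) (f (v 2)) ≤ Nat.gcd (f (v 0)) (f (v 1)) ∧
    Nat.gcd (f (v 0)) (f (v 3)) ≤ Nat.gcd (f (v 0)) (f (v 2))
  have hperm : S.card ≤ 24 * (S.filter O).card := by
    apply aux_perm
    · intro v hv σ
      simp only [hS, mem_filter, Fintype.mem_piFinset] at hv ⊢
      refine ⟨fun i => hv.1 _, hv.2.1.comp σ.injective, fun i => hv.2.2.1 _, ?_⟩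
      have : ∏ i, f ((v ∘ σ) i) = ∏ i, f (v i) := Equiv.prod_comp σ (fun i => f (v i))
      rw [this]; exact hv.2.2.2
    · intro v _
      exact aux_sort v (fun x y => Nat.gcd (f x) (f y))
  let F : (Fin 4 → ℕ) → ℕ × ℕ × ℕ := fun v => (v 0, v 1, v 2)
  let T2 : Finset (ℕ × ℕ × ℕ) := (B ×ˢ Icc 1 N).image (fun q => (q.1.1, q.1.2, q.2))
  have hmaps : ∀ v ∈ S.filter O, F v ∈ Tri ∪ T2 := by
    intro v hv
    simp only [hS, mem_filter, Fintype.mem_piFinset] at hv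
    obtain ⟨⟨hN4, hinj, hsf, hsq⟩, hmax, h21, h32⟩ := hv
    rw [Fin.prod_univ_four] at hsq
    have hx1 : 1 ≤ v 0 := (mem_Icc.1 (hN4 0)).1
    have hxN : ((v 0 : ℕ):ℝ) ≤ Z ^ J := by rw [← hNZ]; exact_mod_cast (mem_Icc.1 (hN4 0)).2
    have hdvd : f (v 0) ∣ f (v 1) * f (v 2) * f (v 3) := by
      apply aux_sq_dvd (hsf 0)
      convert hsq using 1; ring
    have hpos0 : 0 < f (v 0) := Nat.pos_of_ne_zero (hsf 0).ne_zero
    have hg : ∀ i, 0 < Nat.gcd (f (v 0)) (f (v i)) := fun i => Nat.gcd_pos_of_pos_left _ hpos0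
    have hprod : f (v 0) ≤ Nat.gcd (f (v 0)) (f (v 1)) * Nat.gcd (f (v 0)) (f (v 2)) *
        Nat.gcd (f (v 0)) (f (v 3)) := by
      apply Nat.le_of_dvd (Nat.mul_pos (Nat.mul_pos (hg 1) (hg 2)) (hg 3))
      calc f (v 0) = Nat.gcd (f (v 0)) (f (v 1) * f (v 2) * f (v 3)) := (Nat.gcd_eq_left hdvd).symm
        _ ∣ Nat.gcd (f (v 0)) (f (v 1) * f (v 2)) * Nat.gcd (f (v 0)) (f (v 3)) := Nat.gcd_mul_right_dvd_mul_gcd _ _ _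
        _ ∣ _ := Nat.mul_dvd_mul_right (Nat.gcd_mul_right_dvd_mul_gcd _ _ _) _
    have hd := aux_dich e J (v 0) (Nat.gcd (f (v 0)) (f (v 1)) : ℕ) (Nat.gcd (f (v 0)) (f (v 2)) : ℕ)
      (Nat.gcd (f (v 0)) (f (v 3)) : ℕ) c0 Z (by omega) hZ1 hc0 (by exact_mod_cast hx1) hxN
      (by exact_mod_cast hg 3) (by exact_mod_cast h32) (by exact_mod_cast h21)
      (by
        refine (hlow (v 0) hx1).trans ?_
        gcongr
        exact_mod_cast hprod)
    rw [mem_union]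
    rcases hd with hd | hd
    · left
      simp only [hTri, F, mem_filter, mem_product]
      exact ⟨⟨hN4 0, hN4 1, hN4 2⟩, hmax 1, hmax 2, hsf 0, hd⟩
    · right
      simp only [T2, mem_image, mem_product, F]
      refine ⟨((v 0, v 1), v 2), ⟨?_, hN4 2⟩, rfl⟩
      simp only [hB, mem_filter, mem_product]
      refine ⟨⟨hN4 0, hN4 1⟩, lt_of_le_of_ne (hmax 1) ?_, hsf 0, hsf 1, hd.1, hd.2⟩
      intro h10
      have := hinj h10
      simp at this
  have hfibre : ∀ b ∈ Tri ∪ T2, ((S.filter O).filter (fun v => F v = b)).card ≤ e + 2 := by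
    intro b _
    rcases ((S.filter O).filter (fun v => F v = b)).eq_empty_or_nonempty with h0 | ⟨u, hu⟩
    · rw [h0]; simp
    · refine le_trans ?_ (hfib (f (u 3)) N)
      simp only [hS, mem_filter, Fintype.mem_piFinset] at hu
      obtain ⟨⟨⟨-, -, hsu, hqu⟩, -⟩, hFu⟩ := hu
      rw [Fin.prod_univ_four] at hqu
      apply card_le_card_of_injOn (fun v => v 3)
      · intro v hv
        simp only [hS, coe_filter, mem_filter, Fintype.mem_piFinset, Set.mem_ofPred_eq] at hv
        obtain ⟨⟨⟨hN4, -, hsv, hqv⟩, -⟩, hFv⟩ := hv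
        rw [Fin.prod_univ_four] at hqv
        have hF := hFv.trans hFu.symm
        simp only [F, Prod.mk.injEq] at hF
        simp only [coe_filter, Set.mem_ofPred_eq]
        refine ⟨hN4 3, ?_⟩
        rw [hF.1, hF.2.1, hF.2.2] at hqv
        have hp : ∀ i, 0 < f (u i) := fun i => Nat.pos_of_ne_zero (hsu i).ne_zero
        exact aux_sq_det (Nat.mul_pos (Nat.mul_pos (hp 0) (hp 1)) (hp 2)) (hsv 3) (hsu 3) hqv hqu
      · intro v hv w hw hvw
        simp only [coe_filter, mem_filter, Set.mem_ofPred_eq] at hv hw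
        have hF := hv.2.trans hw.2.symm
        simp only [F, Prod.mk.injEq] at hF
        simp only at hvw
        ext i; fin_cases i
        · exact hF.1
        · exact hF.2.1
        · exact hF.2.2
        · exact hvw
  have hcard : (S.filter O).card ≤ (e+2) * (Tri ∪ T2).card :=
    card_le_mul_card_image_of_maps_to hmaps _ hfibre
  have hT2 : T2.card ≤ B.card * N := by
    calc T2.card ≤ (B ×ˢ Icc 1 N).card := card_image_le
      _ = _ := by simp
  have hun : ((Tri ∪ T2).card : ℝ) ≤ N * ((Q * Z)^4 * (4 * c0 * Z^(J-5))) + K * Z^(J-1) * N := by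
    calc ((Tri ∪ T2).card : ℝ) ≤ ((Tri.card + T2.card : ℕ) : ℝ) := by exact_mod_cast card_union_le _ _
      _ ≤ Tri.card + (B.card : ℝ) * N := by push_cast; gcongr; exact_mod_cast hT2
      _ ≤ _ := by gcongr
  have hfin : (S.card : ℝ) ≤ L * (N * Z^(J-1)) := by
    calc (S.card : ℝ) ≤ ((24 * ((e+2) * (Tri ∪ T2).card) : ℕ) : ℝ) := by
          exact_mod_cast hperm.trans (Nat.mul_le_mul_left _ hcard)
      _ = 24 * ((e+2) * ((Tri ∪ T2).card : ℝ)) := by push_cast; rfl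
      _ ≤ 24 * ((e+2) * (N * ((Q * Z)^4 * (4 * c0 * Z^(J-5))) + K * Z^(J-1) * N)) := by gcongr
      _ = _ := by
        have : Z^(J-1) = Z^4 * Z^(J-5) := by rw [← pow_add]; congr 1; omega
        rw [hL, this]; ring
  calc (S.card : ℝ) ≤ L * (N * Z^(J-1)) := hfin
    _ ≤ (ε * Z) * (N * Z^(J-1)) := by gcongr
    _ = ε * (N * (Z * Z^(J-1))) := by ring
    _ = ε * (N:ℝ)^2 := by
      rw [← pow_succ', show J - 1 + 1 = J by omega, ← hNZ]; ring



open Classical in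
lemma aux_coinc (f : ℕ → ℕ) (d N : ℕ)
    (hfib : ∀ v M : ℕ, ((Icc 1 M).filter (fun n => f n = v)).card ≤ d)
    (T : Finset (ℕ × ℕ)) (A : Finset (ℕ × ℕ × ℕ × ℕ))
    (hA : ∀ q ∈ A, (q.1, q.2.1) ∈ T ∧ (q.2.2.1 = q.1 ∨ q.2.2.1 = q.2.1) ∧ q.2.2.2 ∈ Icc 1 N ∧
      Squarefree (f q.1) ∧ Squarefree (f q.2.1) ∧ Squarefree (f q.2.2.1) ∧ Squarefree (f q.2.2.2) ∧
      IsSquare (f q.1 * f q.2.1 * f q.2.2.1 * f q.2.2.2)) :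
    A.card ≤ d * (2 * T.card) := by
  let F : ℕ × ℕ × ℕ × ℕ → ℕ × ℕ × ℕ := fun q => (q.1, q.2.1, q.2.2.1)
  let W : Finset (ℕ × ℕ × ℕ) := T.image (fun t => (t.1, t.2, t.1)) ∪ T.image (fun t => (t.1, t.2, t.2))
  have hmaps : ∀ q ∈ A, F q ∈ W := by
    intro q hq
    obtain ⟨h1, h2, -⟩ := hA q hq
    simp only [W, mem_union, mem_image, F]
    rcases h2 with h2 | h2
    · left; exact ⟨_, h1, by simp [h2]⟩
    · right; exact ⟨_, h1, by simp [h2]⟩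
  have hW : W.card ≤ 2 * T.card := by
    refine (card_union_le _ _).trans ?_
    rw [two_mul]
    exact Nat.add_le_add card_image_le card_image_le
  have hfibre : ∀ b ∈ W, (A.filter (fun q => F q = b)).card ≤ d := by
    intro b _
    rcases (A.filter (fun q => F q = b)).eq_empty_or_nonempty with h0 | ⟨u, hu⟩
    · rw [h0]; simp
    · refine le_trans ?_ (hfib (f u.2.2.2) N)
      rw [mem_filter] at hu
      obtain ⟨huA, hFu⟩ := hu
      obtain ⟨-, -, -, su1, su2, su3, su4, hqu⟩ := hA u huA
      apply card_le_card_of_injOn (fun q => q.2.2.2)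
      · intro v hv
        simp only [coe_filter, Set.mem_ofPred_eq] at hv
        obtain ⟨hvA, hFv⟩ := hv
        obtain ⟨-, -, hvN, -, -, -, sv4, hqv⟩ := hA v hvA
        have hF := hFv.trans hFu.symm
        simp only [F, Prod.mk.injEq] at hF
        simp only [coe_filter, Set.mem_ofPred_eq]
        refine ⟨hvN, ?_⟩
        rw [hF.1, hF.2.1, hF.2.2] at hqv
        exact aux_sq_det (Nat.mul_pos (Nat.mul_pos (Nat.pos_of_ne_zero su1.ne_zero)
          (Nat.pos_of_ne_zero su2.ne_zero)) (Nat.pos_of_ne_zero su3.ne_zero)) sv4 su4 hqv hqu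
      · intro v hv w hw hvw
        simp only [coe_filter, Set.mem_ofPred_eq] at hv hw
        have hF := hv.2.trans hw.2.symm
        simp only [F, Prod.mk.injEq] at hF
        obtain ⟨v1, v2, v3, v4⟩ := v
        obtain ⟨w1, w2, w3, w4⟩ := w
        simp only at hF hvw
        simp [hF.1, hF.2.1, hF.2.2, hvw]
  calc A.card ≤ d * W.card := card_le_mul_card_image_of_maps_to hmaps _ hfibre
    _ ≤ _ := Nat.mul_le_mul_left _ hW

lemma aux_deg (P : Polynomial ℤ)
    (hP : (∃ k : ℕ, 2 ≤ k ∧ ∃ a b : Fin k → ℤ, (∀ i, a i ≠ 0) ∧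
            P = ∏ i, (Polynomial.C (a i) * Polynomial.X + Polynomial.C (b i)) ∧
            ∀ i j, i ≠ j → a i * b j - a j * b i ≠ 0) ∨
          (P.natDegree = 2 ∧ Irreducible P)) : 2 ≤ P.natDegree := by
  rcases hP with ⟨k, hk, a, b, ha, rfl, -⟩ | ⟨h, -⟩
  · have hd : ∀ i, (Polynomial.C (a i) * Polynomial.X + Polynomial.C (b i)).natDegree = 1 :=
      fun i => Polynomial.natDegree_linear (ha i)
    rw [Polynomial.natDegree_prod]
    · rw [Finset.sum_congr rfl (fun i _ => hd i)]; simpa using hk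
    · intro i _ h0
      have := hd i
      rw [h0] at this
      simp at this
  · exact h.ge

open Classical in
lemma aux_comb (f : ℕ → ℕ) (d : ℕ) (hd : 1 ≤ d)
    (hfib : ∀ v M : ℕ, ((Icc 1 M).filter (fun n => f n = v)).card ≤ d)
    (hT : ∀ ε : ℝ, 0 < ε → ∃ N₀ : ℕ, ∀ N : ℕ, N₀ ≤ N →
      (((Icc 1 N ×ˢ Icc 1 N).filter (fun q : ℕ × ℕ => Squarefree (f q.1) ∧ Squarefree (f q.2) ∧
      ∃ p, auxMx p (f q.1) ∧ auxMx p (f q.2))).card : ℝ) ≤ ε * (N:ℝ)^2)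
    (hS : ∀ ε : ℝ, 0 < ε → ∃ N₀ : ℕ, ∀ N : ℕ, N₀ ≤ N →
    (((Fintype.piFinset (fun _ : Fin 4 => Icc 1 N)).filter (fun v => Function.Injective v ∧
      (∀ i, Squarefree (f (v i))) ∧ IsSquare (∏ i, f (v i)))).card : ℝ) ≤ ε * (N:ℝ)^2) :
    ∀ ε : ℝ, 0 < ε → ∃ N₀ : ℕ, ∀ N : ℕ, N₀ ≤ N → ∀ R : Set (ℕ × ℕ × ℕ × ℕ),
      (∀ q ∈ R, (q.1 ∈ Icc 1 N ∧ q.2.1 ∈ Icc 1 N ∧ q.2.2.1 ∈ Icc 1 N ∧ q.2.2.2 ∈ Icc 1 N) ∧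
        q.1 ≠ q.2.1 ∧ q.2.2.1 ≠ q.2.2.2 ∧
        (Squarefree (f q.1) ∧ Squarefree (f q.2.1) ∧ Squarefree (f q.2.2.1) ∧ Squarefree (f q.2.2.2)) ∧
        (∃ p, auxMx p (f q.1) ∧ auxMx p (f q.2.1)) ∧
        IsSquare (f q.1 * f q.2.1 * f q.2.2.1 * f q.2.2.2)) → (R.ncard : ℝ) ≤ ε * (N:ℝ)^2 := by
  intro ε hε
  have hdR : (1:ℝ) ≤ d := by exact_mod_cast hd
  obtain ⟨N1, h1⟩ := hT (ε / (8 * d)) (by positivity)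
  obtain ⟨N2, h2⟩ := hS (ε / 2) (by positivity)
  refine ⟨max N1 N2, fun N hN R hR => ?_⟩
  have h1 := h1 N ((le_max_left _ _).trans hN)
  have h2 := h2 N ((le_max_right _ _).trans hN)
  set T := (Icc 1 N ×ˢ Icc 1 N).filter (fun q : ℕ × ℕ => Squarefree (f q.1) ∧ Squarefree (f q.2) ∧
      ∃ p, auxMx p (f q.1) ∧ auxMx p (f q.2)) with hTdef
  set S := (Fintype.piFinset (fun _ : Fin 4 => Icc 1 N)).filter (fun v => Function.Injective v ∧
      (∀ i, Squarefree (f (v i))) ∧ IsSquare (∏ i, f (v i))) with hSdef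
  let A := (Icc 1 N ×ˢ Icc 1 N ×ˢ Icc 1 N ×ˢ Icc 1 N).filter (fun q => q ∈ R)
  have hAR : (A : Set (ℕ × ℕ × ℕ × ℕ)) = R := by
    ext q
    simp only [A, coe_filter, Set.mem_ofPred_eq, mem_product]
    exact ⟨fun h => h.2, fun h => ⟨(hR q h).1, h⟩⟩
  have hAmem : ∀ q ∈ A, q ∈ R := fun q hq => (mem_filter.1 hq).2
  let A1 := A.filter (fun q => q.2.2.1 = q.1 ∨ q.2.2.1 = q.2.1)
  let A2 := A.filter (fun q => q.2.2.2 = q.1 ∨ q.2.2.2 = q.2.1)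
  let A3 := A.filter (fun q => ¬ (q.2.2.1 = q.1 ∨ q.2.2.1 = q.2.1) ∧ ¬ (q.2.2.2 = q.1 ∨ q.2.2.2 = q.2.1))
  have hun : A ⊆ A1 ∪ (A2 ∪ A3) := by
    intro q hq
    simp only [A1, A2, A3, mem_union, mem_filter]
    tauto
  have hc1 : A1.card ≤ d * (2 * T.card) := by
    apply aux_coinc f d N hfib T A1
    intro q hq
    obtain ⟨hqA, hq2⟩ := mem_filter.1 hq
    obtain ⟨⟨i1, i2, i3, i4⟩, n1, n2, ⟨s1, s2, s3, s4⟩, hm, hs⟩ := hR q (hAmem q hqA)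
    refine ⟨?_, hq2, i4, s1, s2, s3, s4, hs⟩
    rw [hTdef, mem_filter, mem_product]
    exact ⟨⟨i1, i2⟩, s1, s2, hm⟩
  have hc2 : A2.card ≤ d * (2 * T.card) := by
    let σ : ℕ × ℕ × ℕ × ℕ → ℕ × ℕ × ℕ × ℕ := fun q => (q.1, q.2.1, q.2.2.2, q.2.2.1)
    have hσ : Function.Injective σ := by
      rintro ⟨a, b, c, e⟩ ⟨a', b', c', e'⟩ h
      simp only [σ, Prod.mk.injEq] at h ⊢
      tauto
    rw [← card_image_of_injective A2 hσ]
    apply aux_coinc f d N hfib T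
    intro q' hq'
    obtain ⟨q, hq, rfl⟩ := mem_image.1 hq'
    obtain ⟨hqA, hq2⟩ := mem_filter.1 hq
    obtain ⟨⟨i1, i2, i3, i4⟩, n1, n2, ⟨s1, s2, s3, s4⟩, hm, hs⟩ := hR q (hAmem q hqA)
    refine ⟨?_, hq2, i3, s1, s2, s4, s3, ?_⟩
    · rw [hTdef, mem_filter, mem_product]
      exact ⟨⟨i1, i2⟩, s1, s2, hm⟩
    · rw [mul_right_comm] at hs; exact hs
  have hc3 : A3.card ≤ S.card := by
    apply card_le_card_of_injOn (fun q => ![q.1, q.2.1, q.2.2.1, q.2.2.2])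
    · intro q hq
      obtain ⟨hqA, hq2⟩ := mem_filter.1 (mem_coe.1 hq)
      obtain ⟨⟨i1, i2, i3, i4⟩, n1, n2, ⟨s1, s2, s3, s4⟩, hm, hs⟩ := hR q (hAmem q hqA)
      rw [mem_coe, hSdef, mem_filter, Fintype.mem_piFinset]
      refine ⟨?_, ?_, ?_, ?_⟩
      · intro i; fin_cases i
        exacts [i1, i2, i3, i4]
      · push Not at hq2
        intro i j hij
        fin_cases i <;> fin_cases j <;> simp at hij ⊢ <;> grind
      · intro i; fin_cases i <;> simpa using ‹_›
      · rw [Fin.prod_univ_four]; simpa using hs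
    · rintro ⟨a, b, c, e⟩ _ ⟨a', b', c', e'⟩ _ h
      have h0 := congrFun h 0
      have h1 := congrFun h 1
      have h2 := congrFun h 2
      have h3 := congrFun h 3
      simp at h0 h1 h2 h3
      simp [h0, h1, h2, h3]
  have hA : A.card ≤ d * (2 * T.card) + (d * (2 * T.card) + S.card) :=
    (card_le_card hun).trans ((card_union_le _ _).trans (Nat.add_le_add hc1
      ((card_union_le _ _).trans (Nat.add_le_add hc2 hc3))))
  rw [← hAR, Set.ncard_coe_finset]
  have hAr : (A.card : ℝ) ≤ d * (2 * T.card) + (d * (2 * T.card) + S.card) := by exact_mod_cast hA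
  have h3 : (d:ℝ) * T.card ≤ d * (ε / (8 * d) * (N:ℝ)^2) := by gcongr
  have h4 : (d:ℝ) * (ε / (8 * d) * (N:ℝ)^2) = ε / 8 * (N:ℝ)^2 := by field_simp
  linarith

lemma aux_mx (P : Polynomial ℤ) (p n : ℕ) (h : p.Prime ∧ (p : ℤ) ∣ P.eval (n:ℤ) ∧
    ∀ q : ℕ, q.Prime → (q : ℤ) ∣ P.eval (n:ℤ) → q ≤ p) : auxMx p (P.eval (n:ℤ)).natAbs :=
  ⟨h.1, Int.natCast_dvd.1 h.2.1, fun q hq hqd => h.2.2 q hq (Int.natCast_dvd.2 hqd)⟩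

lemma aux_main (P : Polynomial ℤ) (hdeg : 2 ≤ P.natDegree)
    (hpos : ∀ n : ℕ, 0 < n → 2 ≤ P.eval (n : ℤ)) :
    ∀ ε : ℝ, 0 < ε → ∃ N₀ : ℕ, ∀ N : ℕ, N₀ ≤ N → ∀ R : Set (ℕ × ℕ × ℕ × ℕ),
      (∀ q ∈ R, (q.1 ∈ Icc 1 N ∧ q.2.1 ∈ Icc 1 N ∧ q.2.2.1 ∈ Icc 1 N ∧ q.2.2.2 ∈ Icc 1 N) ∧
        q.1 ≠ q.2.1 ∧ q.2.2.1 ≠ q.2.2.2 ∧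
        (Squarefree (P.eval (q.1:ℤ)).natAbs ∧ Squarefree (P.eval (q.2.1:ℤ)).natAbs ∧
          Squarefree (P.eval (q.2.2.1:ℤ)).natAbs ∧ Squarefree (P.eval (q.2.2.2:ℤ)).natAbs) ∧
        (∃ p, auxMx p (P.eval (q.1:ℤ)).natAbs ∧ auxMx p (P.eval (q.2.1:ℤ)).natAbs) ∧
        IsSquare ((P.eval (q.1:ℤ)).natAbs * (P.eval (q.2.1:ℤ)).natAbs * (P.eval (q.2.2.1:ℤ)).natAbs *
          (P.eval (q.2.2.2:ℤ)).natAbs)) → (R.ncard : ℝ) ≤ ε * (N:ℝ)^2 := by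
  obtain ⟨f, hf⟩ : ∃ f : ℕ → ℕ, f = fun n : ℕ => (P.eval (n:ℤ)).natAbs := ⟨_, rfl⟩
  have hfR : ∀ n : ℕ, 1 ≤ n → ((P.eval (n:ℤ) : ℤ) : ℝ) = (f n : ℝ) := by
    intro n hn
    have h2 := hpos n hn
    rw [hf]
    have : ((P.eval (n:ℤ)).natAbs : ℤ) = P.eval (n:ℤ) := Int.natAbs_of_nonneg (by omega)
    have h3 : (((P.eval (n:ℤ)).natAbs : ℤ) : ℝ) = ((P.eval (n:ℤ) : ℤ) : ℝ) := by rw [this]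
    rw [Int.cast_natCast] at h3
    exact h3.symm
  have hP0 : P ≠ 0 := by rintro rfl; simp at hdeg
  obtain ⟨hlc, c0, C1, hc0, hC1, hb⟩ := aux_lower P (by omega) hpos
  obtain ⟨h, C, hC, hex⟩ := aux_expand P hdeg
  have hfib : ∀ v M : ℕ, ((Icc 1 M).filter (fun n => f n = v)).card ≤ P.natDegree := by
    intro v M; rw [hf]; exact aux_fiber P (by omega) hpos v M
  have hcnt : ∀ g M : ℕ, Squarefree g → ((Icc 1 M).filter (fun n => g ∣ f n)).card ≤
      (P.natDegree + P.leadingCoeff.natAbs) ^ g.primeFactors.card * (M / g + 1) := by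
    intro g M hg; rw [hf]; exact aux_count P hP0 g M hg
  have hT := aux_T f (P.natDegree + P.leadingCoeff.natAbs) c0 hc0
    (by
      intro n hn
      have h1 := (hb n hn).1
      rw [hfR n hn] at h1
      refine le_trans ?_ h1
      exact le_self_pow₀ (by exact_mod_cast hn) (by omega))
    (by
      intro p M hp
      have := hcnt p M hp.prime.squarefree
      rwa [hp.primeFactors, card_singleton, pow_one] at this)
  obtain ⟨e, he⟩ : ∃ e, P.natDegree = e + 2 := ⟨P.natDegree - 2, by omega⟩
  have hS := aux_dist f e (P.natDegree + P.leadingCoeff.natAbs) (P.leadingCoeff : ℝ) h C C1 c0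
    (by exact_mod_cast hlc) hC hC1 hc0 (by omega)
    (by
      intro n hn
      have := hex n hn
      rwa [hfR n hn, he, Nat.add_sub_cancel] at this)
    (by
      intro n hn
      have := (hb n hn).2
      rwa [hfR n hn, he] at this)
    (by
      intro n hn
      have := (hb n hn).1
      rwa [hfR n hn, he] at this)
    (by rw [← he]; exact hfib) hcnt
  have := aux_comb f P.natDegree (by omega) hfib hT hS
  rw [hf] at this
  exact this


end AuxHelpers

/-- For `P` admissible and either an irreducible quadratic or a product of at least two
pairwise non-proportional linear factors, with `P(n) ≥ 2` for `n ≥ 1`: the number of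
quadruples `(m₁,m₂,n₁,n₂) ∈ [1,N]⁴` with `m₁ ≠ m₂`, `n₁ ≠ n₂`, each `P`-value squarefree,
`P⁺(P(m₁)) = P⁺(P(m₂))`, `P⁺(P(n₁)) = P⁺(P(n₂))`, and `P(m₁)P(m₂)P(n₁)P(n₂)` a perfect
square, is `o(N²)` as `N → ∞`. -/
theorem offdiagonal_quadruples_with_matching_max_prime_o
    (P : Polynomial ℤ)
    (hP : (∃ k : ℕ, 2 ≤ k ∧ ∃ a b : Fin k → ℤ, (∀ i, a i ≠ 0) ∧
            P = ∏ i, (Polynomial.C (a i) * Polynomial.X + Polynomial.C (b i)) ∧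
            ∀ i j, i ≠ j → a i * b j - a j * b i ≠ 0) ∨
          (P.natDegree = 2 ∧ Irreducible P))
    (hadm : ¬ ∃ p : ℕ, p.Prime ∧ ∀ n : ℕ, 0 < n → (p : ℤ)^2 ∣ P.eval (n : ℤ))
    (hpos : ∀ n : ℕ, 0 < n → 2 ≤ P.eval (n : ℤ)) :
    ∀ ε : ℝ, 0 < ε → ∃ N₀ : ℕ, ∀ N : ℕ, N₀ ≤ N →
      (({q : ℕ × ℕ × ℕ × ℕ |
          (1 ≤ q.1 ∧ q.1 ≤ N) ∧ (1 ≤ q.2.1 ∧ q.2.1 ≤ N) ∧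
          (1 ≤ q.2.2.1 ∧ q.2.2.1 ≤ N) ∧ (1 ≤ q.2.2.2 ∧ q.2.2.2 ≤ N) ∧
          q.1 ≠ q.2.1 ∧ q.2.2.1 ≠ q.2.2.2 ∧
          Squarefree (P.eval (q.1 : ℤ)) ∧ Squarefree (P.eval (q.2.1 : ℤ)) ∧
          Squarefree (P.eval (q.2.2.1 : ℤ)) ∧ Squarefree (P.eval (q.2.2.2 : ℤ)) ∧
          (∃ p : ℕ, IsMaxPrimeFac p (P.eval (q.1 : ℤ)) ∧ IsMaxPrimeFac p (P.eval (q.2.1 : ℤ))) ∧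
          (∃ p : ℕ, IsMaxPrimeFac p (P.eval (q.2.2.1 : ℤ)) ∧
            IsMaxPrimeFac p (P.eval (q.2.2.2 : ℤ))) ∧
          IsSquare (P.eval (q.1 : ℤ) * P.eval (q.2.1 : ℤ) *
            P.eval (q.2.2.1 : ℤ) * P.eval (q.2.2.2 : ℤ))}.ncard : ℝ)) ≤
        ε * (N : ℝ)^2 := by
  intro ε hε
  obtain ⟨N₀, h⟩ := aux_main P (aux_deg P hP) hpos ε hε
  refine ⟨N₀, fun N hN => h N hN _ ?_⟩
  rintro q ⟨i1, i2, i3, i4, n1, n2, s1, s2, s3, s4, ⟨p, p1, p2⟩, -, hs⟩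
  refine ⟨⟨Finset.mem_Icc.2 i1, Finset.mem_Icc.2 i2, Finset.mem_Icc.2 i3, Finset.mem_Icc.2 i4⟩, n1, n2,
    ⟨Int.squarefree_natAbs.2 s1, Int.squarefree_natAbs.2 s2, Int.squarefree_natAbs.2 s3,
      Int.squarefree_natAbs.2 s4⟩, ⟨p, aux_mx P p _ p1, aux_mx P p _ p2⟩, ?_⟩
  obtain ⟨r, hr⟩ := hs
  refine ⟨r.natAbs, ?_⟩
  rw [← Int.natAbs_mul, ← Int.natAbs_mul, ← Int.natAbs_mul, ← Int.natAbs_mul, hr]
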